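/- arXiv:1603.00454 — 5 statements merged into one kernel-verified Lean document; each statement's English description precedes it below -/
import Mathlib

section
/- If A ⊆ Z is an infinite subset definable in (Z,+,<,0) that is bounded above or bounded below, then ℕ is definable (with parameters) in the structure (Z,+,0,A). -/
open FirstOrder

/-- Function symbols of the language of `(ℤ,+,0)`: one constant (`0`) and one binary function
(`+`). -/
def grpFunc : ℕ → Type
  | 0 => Unit
  | 2 => Unit
  | _ => Empty

/-- The language of `(ℤ,+,0)`. -/
def LangGrp : FirstOrder.Language := ⟨grpFunc, fun _ => Empty⟩

noncomputable instance : LangGrp.Structure ℤ where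
  funMap {n} f x :=
    match n, f with
    | 0, _ => 0
    | 2, _ => x 0 + x 1
  RelMap {n} r _ := r.elim

/-- The language of `(ℤ,+,<,0)`. -/
def LangOrdGrp : FirstOrder.Language := LangGrp.sum FirstOrder.Language.order

noncomputable instance : FirstOrder.Language.order.Structure ℤ :=
  FirstOrder.Language.orderStructure ℤ

noncomputable instance : LangOrdGrp.Structure ℤ :=
  inferInstanceAs ((LangGrp.sum FirstOrder.Language.order).Structure ℤ)

/-- Presburger sets: subsets of `ℤⁿ` definable with parameters in `(ℤ,+,<,0)`. -/
def IsPresburger {n : ℕ} (s : Set ((Fin n) → ℤ)) : Prop :=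
  Set.Definable (Set.univ : Set ℤ) LangOrdGrp s

/-- Definability with parameters in `(ℤ,+,0)`. -/
def IsGroupDefinable {n : ℕ} (s : Set ((Fin n) → ℤ)) : Prop :=
  Set.Definable (Set.univ : Set ℤ) LangGrp s

/-- The language of `(ℤ,+,0,A)` with `A` an `n`-ary predicate. -/
def LangGrpRel (n : ℕ) : FirstOrder.Language :=
  ⟨grpFunc, fun m => if m = n then Unit else Empty⟩

/-- The structure `(ℤ,+,0,A)`. -/
noncomputable def relStructure {n : ℕ} (A : Set (Fin n → ℤ)) : (LangGrpRel n).Structure ℤ where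
  funMap {m} f x :=
    match m, f with
    | 0, _ => 0
    | 2, _ => x 0 + x 1
  RelMap {m} _ x := if h : m = n then (fun i : Fin n => x (Fin.cast h.symm i)) ∈ A else False

/-- `A ⊆ ℤⁿ` defines the ordering if `ℕ` (the set of nonnegative integers) is definable with
parameters in the expansion `(ℤ,+,0,A)`. -/
def DefinesOrdering {n : ℕ} (A : Set (Fin n → ℤ)) : Prop :=
  letI := relStructure A
  Set.Definable (Set.univ : Set ℤ) (LangGrpRel n) {f : Fin 1 → ℤ | 0 ≤ f 0}

/-- A subset of `ℤ` is Presburger if the corresponding unary set is definable in `(ℤ,+,<,0)`. -/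
def IsPresburger1 (A : Set ℤ) : Prop := IsPresburger {f : Fin 1 → ℤ | f 0 ∈ A}

/-- A subset of `ℤ` is definable in `(ℤ,+,0)`. -/
def IsGroupDefinable1 (A : Set ℤ) : Prop := IsGroupDefinable {f : Fin 1 → ℤ | f 0 ∈ A}

/-- A subset of `ℤ` defines the ordering. -/
def DefinesOrdering1 (A : Set ℤ) : Prop := DefinesOrdering {f : Fin 1 → ℤ | f 0 ∈ A}

open Set FirstOrder Language

lemma term_affine {α : Type*} (t : (LangOrdGrp[[(Set.univ : Set ℤ)]]).Term α) :
    ∃ (k : ℤ) (f : (α → ℤ) →+ ℤ), ∀ v : α → ℤ, t.realize v = k + f v := by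
  induction t with
  | var i => exact ⟨0, Pi.evalAddMonoidHom _ i, fun v => by simp⟩
  | @func l f ts ih =>
    choose k u ih using ih
    cases f with
    | inl f =>
      cases f with
      | inl f =>
        match l, f with
        | 0, f => exact ⟨0, 0, fun v => by
            simp only [Term.realize]
            rfl⟩
        | 2, f =>
          refine ⟨k 0 + k 1, u 0 + u 1, fun v => ?_⟩
          have : (Term.func (L := LangOrdGrp[[(Set.univ : Set ℤ)]])
              (Sum.inl (Sum.inl f)) ts).realize v
              = (ts 0).realize v + (ts 1).realize v := rfl
          rw [this, ih, ih, AddMonoidHom.add_apply]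
          ring
        | 1, f => exact f.elim
        | (n+3), f => exact f.elim
      | inr f => exact f.elim
    | inr f =>
      cases l with
      | zero =>
        refine ⟨(f : (Set.univ : Set ℤ)).1, 0, fun v => ?_⟩
        simp only [Term.realize, AddMonoidHom.zero_apply, add_zero]
        rfl
      | succ => nomatch f

lemma semilinear_Ici (c : ℤ) : IsSemilinearSet (Set.Ici c) := by
  have h := ((IsSemilinearSet.univ (M := ℕ)).image (Nat.castAddMonoidHom ℤ)).vadd c
  convert! h using 1
  ext x
  simp only [Set.mem_Ici, Set.image_univ, Set.mem_vadd_set, Set.mem_range, vadd_eq_add]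
  constructor
  · intro hx
    exact ⟨x - c, ⟨(x - c).toNat, by simp; omega⟩, by ring⟩
  · rintro ⟨y, ⟨n, rfl⟩, rfl⟩
    simp

lemma semilinear_bounded {α : Type*} [Finite α] {n : ℕ}
    (φ : (LangOrdGrp[[(Set.univ : Set ℤ)]]).BoundedFormula α n) :
    IsSemilinearSet {v : α ⊕ Fin n → ℤ | φ.Realize (v ∘ Sum.inl) (v ∘ Sum.inr)} := by
  have := Fintype.ofFinite α
  induction φ with simp only [BoundedFormula.Realize]
  | equal t₁ t₂ =>
    rcases term_affine t₁ with ⟨k₁, u₁, ht₁⟩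
    rcases term_affine t₂ with ⟨k₂, u₂, ht₂⟩
    convert! isSemilinearSet_setOfPred_eq k₁ k₂ u₁ u₂
    rename_i v
    have h3 : Sum.elim (v ∘ Sum.inl) (v ∘ Sum.inr) = v := by simp
    · rw [h3, ht₁]
    · rename_i v
      have h3 : Sum.elim (v ∘ Sum.inl) (v ∘ Sum.inr) = v := by simp
      rw [h3, ht₂]
  | @rel n l R ts =>
    cases R with
    | inl R =>
      cases R with
      | inl R => exact R.elim
      | inr R =>
        cases R
        rcases term_affine (ts 0) with ⟨k₁, u₁, ht₁⟩
        rcases term_affine (ts 1) with ⟨k₂, u₂, ht₂⟩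
        convert! (semilinear_Ici (k₁ - k₂)).preimage (u₂ - u₁) using 1
        ext v
        have h1 := ht₁ (Sum.elim (v ∘ Sum.inl) (v ∘ Sum.inr))
        have h2 := ht₂ (Sum.elim (v ∘ Sum.inl) (v ∘ Sum.inr))
        simp only [Set.mem_preimage, Set.mem_Ici, AddMonoidHom.sub_apply]
        have h3 : Sum.elim (v ∘ Sum.inl) (v ∘ Sum.inr) = v := by simp
        rw [h3] at h1 h2
        rw [Set.mem_ofPred_eq, h3]
        change (ts 0).realize v ≤ (ts 1).realize v ↔ _
        rw [h1, h2]
        omega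
    | inr R => exact R.elim
  | falsum => exact .empty
  | imp _ _ ih₁ ih₂ =>
    convert! (ih₂.compl.inter ih₁).compl using 1
    simp [ofPred_inter_eq_sep, imp_iff_not_or, compl_ofPred]
  | @all n φ ih =>
    let e := (Equiv.sumAssoc α (Fin n) (Fin 1)).trans (Equiv.sumCongr (.refl α) finSumFinEquiv)
    rw [← isSemilinearSet_image_iff (LinearEquiv.funCongrLeft ℕ ℤ e)] at ih
    convert! ih.compl.proj.compl using 1
    simp_rw [compl_ofPred, not_exists, Fin.forall_fin_succ_pi, Fin.forall_fin_zero_pi,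
      mem_compl_iff, mem_image, not_not, ← LinearEquiv.eq_symm_apply, LinearEquiv.funCongrLeft_symm,
      exists_eq_right, mem_ofPred, LinearEquiv.funCongrLeft_apply, LinearMap.funLeft,
      LinearMap.coe_mk, AddHom.coe_mk]
    congr! 4
    ext i
    cases i using Fin.lastCases <;> simp [e]

lemma semilinear_of_presburger {A : Set ℤ} (hA : IsPresburger1 A) : IsSemilinearSet A := by
  obtain ⟨φ, hφ⟩ := hA
  have h := semilinear_bounded φ
  let g : ℤ →+ (Fin 1 ⊕ Fin 0 → ℤ) :=
    { toFun := fun x _ => x, map_zero' := rfl, map_add' := fun _ _ => rfl }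
  convert! h.preimage g using 1
  ext x
  have h1 := Set.ext_iff.1 hφ (fun _ => x)
  simp only [Set.mem_ofPred_eq] at h1
  rw [h1, Set.mem_preimage, Set.mem_ofPred_eq, Formula.Realize]
  apply iff_of_eq
  congr 1
  exact Subsingleton.elim _ _

/-- bounded below, infinite, semilinear: contains a progression. -/
lemma exists_progression {A : Set ℤ} (hA : IsSemilinearSet A) (hinf : A.Infinite)
    (hb : BddBelow A) : ∃ a : ℤ, ∃ p : ℕ, 0 < p ∧ ∀ k : ℕ, a + p * k ∈ A := by
  have h := hA.preimage (Nat.castAddMonoidHom ℤ)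
  rw [Nat.isSemilinearSet_iff_ultimately_periodic] at h
  obtain ⟨k, p, hp, h⟩ := h
  have hna : ¬ BddAbove A := fun ha => hinf (BddBelow.finite_of_bddAbove hb ha)
  rw [not_bddAbove_iff] at hna
  obtain ⟨a, haA, hak⟩ := hna k
  refine ⟨a, p, hp, fun j => ?_⟩
  lift a to ℕ using by omega
  have : ∀ j : ℕ, a + p * j ∈ (Nat.castAddMonoidHom ℤ) ⁻¹' A := by
    intro j
    induction j with
    | zero => simpa using haA
    | succ j ih =>
      rw [h _ (by push_cast at hak; have := Nat.zero_le (p * j); omega)] at ih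
      rw [mul_add, mul_one, ← add_assoc]
      exact ih
  simpa using this j

lemma definableFun_affine (A : Set (Fin 1 → ℤ)) (a : ℤ) (p : ℕ) :
    letI := relStructure A
    (Set.univ : Set ℤ).DefinableFun (LangGrpRel 1) (fun v : Fin 1 → ℤ => a + p * v 0) := by
  letI := relStructure A
  induction p with
  | zero => simpa using (LangGrpRel 1).definableFun_const (Fin 1) (Set.mem_univ a)
  | succ p ih =>
    have hadd : (Set.univ : Set ℤ).DefinableFun (LangGrpRel 1) (fun v : Fin 2 → ℤ => v 0 + v 1) :=
      DefinableFun.of_empty (DefinableFun.fun_symbol (L := LangGrpRel 1) (M := ℤ) (n := 2) ())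
    have := hadd.comp (g := fun v : Fin 1 → ℤ => ![a + p * v 0, v 0]) (by
      intro i
      fin_cases i
      · exact ih
      · exact DefinableFun.proj _)
    convert! this using 2
    simp
    ring

lemma definable_preimage (A : Set (Fin 1 → ℤ)) (S : Set ℤ) (a : ℤ) (p : ℕ)
    (hS : letI := relStructure A
      (Set.univ : Set ℤ).Definable (LangGrpRel 1) {f : Fin 1 → ℤ | f 0 ∈ S}) :
    letI := relStructure A
    (Set.univ : Set ℤ).Definable (LangGrpRel 1) {f : Fin 1 → ℤ | a + p * f 0 ∈ S} := by
  letI := relStructure A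
  exact hS.preimage_map (F := fun f _ => a + p * f 0) (fun _ => definableFun_affine A a p)

lemma definable_self (A : Set (Fin 1 → ℤ)) :
    letI := relStructure A
    (Set.univ : Set ℤ).Definable (LangGrpRel 1) A := by
  letI := relStructure A
  apply Definable.mono _ (Set.empty_subset _)
  rw [empty_definable_iff]
  refine ⟨Relations.formula (L := LangGrpRel 1) (n := 1) (() : Unit) (fun i => Term.var i), ?_⟩
  ext v
  rw [Set.mem_ofPred_eq]
  change _ ↔ (if h : 1 = 1 then (fun i : Fin 1 => v (Fin.cast h.symm i)) ∈ A else False)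
  simp

lemma definable_finite (A : Set (Fin 1 → ℤ)) (F : Set ℤ) (hF : F.Finite) :
    letI := relStructure A
    (Set.univ : Set ℤ).Definable (LangGrpRel 1) {f : Fin 1 → ℤ | f 0 ∈ F} := by
  letI := relStructure A
  have h := definable_biUnion_finset (L := LangGrpRel 1) (A := (Set.univ : Set ℤ))
    (f := fun a : ℤ => {f : Fin 1 → ℤ | f 0 = a})
    (fun a => (DefinableFun.proj (LangGrpRel 1)).ofPred_eq_const (Set.mem_univ a)) hF.toFinset
  convert! h using 1
  ext v
  simp

/-- an infinite Presburger subset of `ℤ` which is bounded above or below defines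
the ordering. -/
theorem stmt1 (A : Set ℤ) (hA : IsPresburger1 A) (hinf : A.Infinite)
    (hbdd : BddAbove A ∨ BddBelow A) : DefinesOrdering1 A := by
  have hs := semilinear_of_presburger hA
  unfold DefinesOrdering1 DefinesOrdering
  letI := relStructure {f : Fin 1 → ℤ | f 0 ∈ A}
  have hself := definable_self {f : Fin 1 → ℤ | f 0 ∈ A}
  rcases hbdd with hb | hb
  · have hneg : IsSemilinearSet (-A) := by
      have := hs.image (negAddMonoidHom (α := ℤ))
      convert! this using 1
      ext x
      simp
    obtain ⟨a, p, hp, h⟩ := exists_progression hneg (by rw [Set.infinite_neg]; exact hinf) hb.neg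
    obtain ⟨b, hb⟩ := hb
    have hfin : ({x : ℤ | -a + p * x ∈ A} \ {x | x ≤ 0}).Finite := by
      apply (Set.finite_Icc 0 (|b| + |a|)).subset
      rintro x ⟨hx, hx0⟩
      have hx1 := hb hx
      simp only [Set.mem_ofPred_eq, not_le] at hx0
      refine ⟨hx0.le, ?_⟩
      have h2 : x ≤ p * x := by nlinarith [(by exact_mod_cast hp : (1 : ℤ) ≤ p)]
      have := le_abs_self b
      have := le_abs_self a
      omega
    have hneg : (Set.univ : Set ℤ).Definable (LangGrpRel 1)
        {f : Fin 1 → ℤ | f 0 ∈ {x : ℤ | x ≤ 0}} := by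
      convert! (definable_preimage _ A (-a) p hself).sdiff (definable_finite _ _ hfin) using 1
      ext v
      simp only [Set.mem_ofPred_eq, Set.mem_sdiff, not_and, not_not]
      constructor
      · intro hv
        refine ⟨?_, fun _ => hv⟩
        have := h (-(v 0)).toNat
        rw [Int.toNat_of_nonneg (by omega), Set.mem_neg] at this
        convert! this using 1
        ring
      · rintro ⟨h1, h2⟩
        exact h2 h1
    convert! (definable_preimage _ _ 1 1 hneg).compl using 1
    ext v
    simp only [Set.mem_ofPred_eq, Set.mem_compl_iff]
    push_cast
    omega
  · obtain ⟨a, p, hp, h⟩ := exists_progression hs hinf hb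
    obtain ⟨b, hb⟩ := hb
    have hfin : ({x : ℤ | a + p * x ∈ A} \ {x | 0 ≤ x}).Finite := by
      apply (Set.finite_Icc (-(|b| + |a|)) 0).subset
      rintro x ⟨hx, hx0⟩
      have hx1 := hb hx
      simp only [Set.mem_ofPred_eq, not_le] at hx0
      refine ⟨?_, hx0.le⟩
      have h2 : p * x ≤ x := by nlinarith [(by exact_mod_cast hp : (1 : ℤ) ≤ p)]
      have := neg_abs_le b
      have := le_abs_self a
      omega
    convert! (definable_preimage _ A a p hself).sdiff (definable_finite _ _ hfin) using 1
    ext v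
    simp only [Set.mem_ofPred_eq, Set.mem_sdiff, not_and, not_not]
    constructor
    · intro hv
      refine ⟨?_, fun _ => hv⟩
      have := h (v 0).toNat
      rwa [Int.toNat_of_nonneg hv] at this
    · rintro ⟨h1, h2⟩
      exact h2 h1
end

section
/- Every nonempty subset of Z^n definable in (Z,+,0) can be written as a finite union of quasi-cosets, where a quasi-coset of rank k is a set of the form C \ Z with C a coset of a rank-k subgroup of Z^n and Z ⊆ C a (Z,+,0)-definable set of rank strictly less than k. -/
open FirstOrder

/-- A coset of a subgroup of `ℤⁿ`. -/
def IsCoset {n : ℕ} (S : Set (Fin n → ℤ)) : Prop :=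
  ∃ (a : Fin n → ℤ) (H : AddSubgroup (Fin n → ℤ)), S = (a + ·) '' (H : Set (Fin n → ℤ))

/-- A coset of a rank-`k` subgroup of `ℤⁿ`. -/
def IsCosetOfRank {n : ℕ} (k : ℕ) (S : Set (Fin n → ℤ)) : Prop :=
  ∃ (a : Fin n → ℤ) (H : AddSubgroup (Fin n → ℤ)),
    Module.finrank ℤ H = k ∧ S = (a + ·) '' (H : Set (Fin n → ℤ))

/-- `X` is contained in a finite union of cosets of subgroups of rank at most `k`. -/
def CoveredByRank {n : ℕ} (X : Set (Fin n → ℤ)) (k : ℕ) : Prop :=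
  ∃ (m : ℕ) (C : Fin m → Set (Fin n → ℤ)),
    (∀ i, ∃ ki ≤ k, IsCosetOfRank ki (C i)) ∧ X ⊆ ⋃ i, C i

open Classical in
/-- The rank of a subset of `ℤⁿ`: the least `k` such that `X` is covered by finitely many cosets
of rank at most `k`, with `rk(∅) = -1`. -/
noncomputable def setRank {n : ℕ} (X : Set (Fin n → ℤ)) : ℤ :=
  if X = ∅ then -1 else ((sInf {k : ℕ | CoveredByRank X k} : ℕ) : ℤ)

/-- A quasi-coset of rank `k` in `ℤⁿ`: a coset of a rank-`k` subgroup minus a `(ℤ,+,0)`-definable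
subset of rank `< k`. -/
def IsQuasiCoset {n : ℕ} (k : ℕ) (Q : Set (Fin n → ℤ)) : Prop :=
  ∃ C Z : Set (Fin n → ℤ), IsCosetOfRank k C ∧ Z ⊆ C ∧ IsGroupDefinable Z ∧
    setRank Z < (k : ℤ) ∧ Q = C \ Z

namespace QC

/-- the coset `a + H` -/
def cst {G : Type*} [AddCommGroup G] (a : G) (H : AddSubgroup G) : Set G := {x | x - a ∈ H}

theorem mem_cst {G : Type*} [AddCommGroup G] {a x : G} {H : AddSubgroup G} :
    x ∈ cst a H ↔ x - a ∈ H := Iff.rfl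

/-- being a coset -/
def IsC {G : Type*} [AddCommGroup G] (S : Set G) : Prop := ∃ a H, S = cst a H

/-- coset minus a finite union of cosets -/
def Basic {G : Type*} [AddCommGroup G] (S : Set G) : Prop :=
  ∃ (a : G) (H : AddSubgroup G) (F : Set (Set G)), F.Finite ∧ (∀ D ∈ F, IsC D) ∧
    S = cst a H \ ⋃₀ F

/-- finite unions -/
inductive FU {G : Type*} (P : Set G → Prop) : Set G → Prop
  | empty : FU P ∅
  | base {S} : P S → FU P S
  | union {S T} : FU P S → FU P T → FU P (S ∪ T)

section
variable {G G' : Type*} {P Q : Set G → Prop}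

theorem FU.sUnion {F : Set (Set G)} (hF : F.Finite) (h : ∀ D ∈ F, FU P D) : FU P (⋃₀ F) := by
  induction F, hF using Set.Finite.induction_on with
  | empty => simpa using FU.empty
  | insert _ _ ih =>
    rw [Set.sUnion_insert]
    exact FU.union (h _ (Set.mem_insert _ _)) (ih fun D hD => h D (Set.mem_insert_of_mem _ hD))

theorem FU.bind {S : Set G} (h : FU P S) (hPQ : ∀ T, P T → FU Q T) : FU Q S := by
  induction h with
  | empty => exact .empty
  | base h => exact hPQ _ h
  | union _ _ h1 h2 => exact .union h1 h2

theorem FU.exists_fin {S : Set G} (h : FU P S) :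
    ∃ (m : ℕ) (Q : Fin m → Set G), (∀ i, P (Q i)) ∧ S = ⋃ i, Q i := by
  induction h with
  | empty => exact ⟨0, fun _ => ∅, fun i => i.elim0, by simp⟩
  | @base S h => exact ⟨1, fun _ => S, fun _ => h, (Set.iUnion_const S).symm⟩
  | union _ _ h1 h2 =>
    obtain ⟨m1, Q1, h1, rfl⟩ := h1
    obtain ⟨m2, Q2, h2, rfl⟩ := h2
    refine ⟨m1 + m2, Fin.append Q1 Q2, fun i => ?_, ?_⟩
    · refine Fin.addCases (fun i => ?_) (fun i => ?_) i
      · simpa using h1 i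
      · simpa using h2 i
    · ext x
      simp only [Set.mem_union, Set.mem_iUnion]
      constructor
      · rintro (⟨i, hi⟩ | ⟨i, hi⟩)
        · exact ⟨Fin.castAdd _ i, by simpa using hi⟩
        · exact ⟨Fin.natAdd _ i, by simpa using hi⟩
      · rintro ⟨i, hi⟩
        revert hi
        refine Fin.addCases (fun i => ?_) (fun i => ?_) i
        · intro hi
          exact Or.inl ⟨i, by simpa using hi⟩
        · intro hi
          exact Or.inr ⟨i, by simpa using hi⟩

theorem FU.image {P' : Set G' → Prop} (f : G → G') {S : Set G} (h : FU P S)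
    (hP : ∀ T, P T → FU P' (f '' T)) : FU P' (f '' S) := by
  induction h with
  | empty => simpa using FU.empty
  | base h => exact hP _ h
  | union _ _ h1 h2 => rw [Set.image_union]; exact .union h1 h2
end

section
variable {G G' : Type*} [AddCommGroup G] [AddCommGroup G']

theorem cst_inter (a b : G) (H K : AddSubgroup G) {c : G} (hc : c ∈ cst a H ∩ cst b K) :
    cst a H ∩ cst b K = cst c (H ⊓ K) := by
  ext x
  obtain ⟨h1, h2⟩ := hc
  rw [mem_cst] at h1 h2
  simp only [Set.mem_inter_iff, mem_cst, AddSubgroup.mem_inf]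
  constructor
  · rintro ⟨h3, h4⟩
    exact ⟨by simpa using H.sub_mem h3 h1, by simpa using K.sub_mem h4 h2⟩
  · rintro ⟨h3, h4⟩
    exact ⟨by simpa using H.add_mem h3 h1, by simpa using K.add_mem h4 h2⟩

theorem self_mem_cst (a : G) (H : AddSubgroup G) : a ∈ cst a H := by simp [mem_cst]

theorem basic_cst (a : G) (H : AddSubgroup G) : Basic (cst a H) :=
  ⟨a, H, ∅, Set.finite_empty, by simp, by simp⟩

theorem Basic.inter {S T : Set G} (hS : Basic S) (hT : Basic T) : FU Basic (S ∩ T) := by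
  obtain ⟨a, H, F, hF, hD, rfl⟩ := hS
  obtain ⟨b, K, E, hE, hD', rfl⟩ := hT
  by_cases hc : ∃ c, c ∈ cst a H ∩ cst b K
  · obtain ⟨c, hc⟩ := hc
    refine .base ⟨c, H ⊓ K, F ∪ E, hF.union hE, ?_, ?_⟩
    · rintro D (h | h)
      · exact hD _ h
      · exact hD' _ h
    · rw [← cst_inter a b H K hc, Set.sUnion_union]
      ext x
      simp only [Set.mem_inter_iff, Set.mem_sdiff, Set.mem_union]
      tauto
  · have : (cst a H \ ⋃₀ F) ∩ (cst b K \ ⋃₀ E) = ∅ := by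
      apply Set.eq_empty_of_forall_notMem
      rintro x ⟨h1, h2⟩
      exact hc ⟨x, h1.1, h2.1⟩
    rw [this]; exact .empty

theorem FU.inter {S T : Set G} (hS : FU Basic S) (hT : FU Basic T) : FU Basic (S ∩ T) := by
  induction hS with
  | empty => simpa using FU.empty
  | union _ _ h1 h2 => rw [Set.union_inter_distrib_right]; exact .union h1 h2
  | base h =>
    induction hT with
    | empty => simpa using FU.empty
    | union _ _ h1 h2 => rw [Set.inter_union_distrib_left]; exact .union h1 h2
    | base h' => exact h.inter h'

theorem fu_univ : FU Basic (Set.univ : Set G) := by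
  have : (Set.univ : Set G) = cst 0 ⊤ := by ext; simp [mem_cst]
  rw [this]; exact .base (basic_cst _ _)

theorem fu_compl {S : Set G} (hS : FU Basic S) : FU Basic Sᶜ := by
  induction hS with
  | empty => simpa using fu_univ
  | union _ _ h1 h2 => rw [Set.compl_union]; exact h1.inter h2
  | base h =>
    obtain ⟨a, H, F, hF, hD, rfl⟩ := h
    have : (cst a H \ ⋃₀ F)ᶜ = (cst a H)ᶜ ∪ ⋃₀ F := by
      ext x
      simp only [Set.mem_compl_iff, Set.mem_sdiff, Set.mem_union]
      tauto
    rw [this]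
    refine .union ?_ (FU.sUnion hF ?_)
    · refine .base ⟨0, ⊤, {cst a H}, Set.finite_singleton _, ?_, ?_⟩
      · rintro D rfl
        exact ⟨_, _, rfl⟩
      · ext x; simp [mem_cst]
    · intro D h
      obtain ⟨b, K, rfl⟩ := hD D h
      exact .base (basic_cst _ _)

/-- `m • H` -/
def mul (m : ℕ) (H : AddSubgroup G) : AddSubgroup G := H.map (nsmulAddMonoidHom m)

theorem mem_mul {m : ℕ} {H : AddSubgroup G} {x : G} : x ∈ mul m H ↔ ∃ h ∈ H, m • h = x := by
  simp [mul, AddSubgroup.mem_map]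

theorem mul_le (m : ℕ) (H : AddSubgroup G) : mul m H ≤ H := by
  intro x hx
  obtain ⟨h, hh, rfl⟩ := mem_mul.1 hx
  exact H.nsmul_mem hh m

/-- split a coset of `H` in finitely many cosets of `m • H` -/
theorem split_cst [Module.Finite ℤ G] (a : G) (H : AddSubgroup G) {m : ℕ} (hm : 0 < m) :
    ∃ T : Set G, T.Finite ∧ cst a H = ⋃ b ∈ T, cst b (mul m H) := by
  have hfg : Module.Finite ℤ H :=
    inferInstanceAs (Module.Finite ℤ (AddSubgroup.toIntSubmodule H))
  let N : AddSubgroup H := (mul m H).addSubgroupOf H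
  have : Module.Finite ℤ (H ⧸ N) :=
    Module.Finite.of_surjective (QuotientAddGroup.mk' N).toIntLinearMap
      (QuotientAddGroup.mk'_surjective N)
  have : Finite (H ⧸ N) := by
    refine Module.finite_of_fg_torsion _ ?_
    intro x
    obtain ⟨h, rfl⟩ := QuotientAddGroup.mk'_surjective N x
    refine ⟨⟨m, by simp; omega⟩, ?_⟩
    have : m • (QuotientAddGroup.mk' N h) = 0 := by
      rw [← map_nsmul]
      refine (QuotientAddGroup.eq_zero_iff _).2 ?_
      exact AddSubgroup.mem_addSubgroupOf.2 (mem_mul.2 ⟨h, h.2, by simp⟩)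
    simpa [Submonoid.smul_def] using this
  refine ⟨Set.range fun q : H ⧸ N => a + (q.out : H), Set.finite_range _, ?_⟩
  ext x
  simp only [Set.mem_range, Set.iUnion_exists, Set.iUnion_iUnion_eq', Set.mem_iUnion, mem_cst]
  constructor
  · intro hx
    refine ⟨QuotientAddGroup.mk (⟨x - a, hx⟩ : H), ?_⟩
    have h1 : ((QuotientAddGroup.mk (⟨x - a, hx⟩ : H) : H ⧸ N).out : H ⧸ N) = 
       QuotientAddGroup.mk (⟨x - a, hx⟩ : H) := Quotient.out_eq _
    have h2 := AddSubgroup.mem_addSubgroupOf.1 (QuotientAddGroup.eq.1 h1)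
    have h3 : x - (a + ((QuotientAddGroup.mk (⟨x - a, hx⟩ : H) : H ⧸ N).out : H)) =
      -((QuotientAddGroup.mk (⟨x - a, hx⟩ : H) : H ⧸ N).out : H) + (x - a) := by abel
    rw [h3]
    simpa using h2
  · rintro ⟨q, hq⟩
    have := H.add_mem (mul_le _ _ hq) q.out.2
    convert this using 1
    abel

/-- relation: the direction of `D` contains some positive multiple of `K` -/
def Big (K : AddSubgroup G) (D : Set G) : Prop :=
  ∃ N : ℕ, 0 < N ∧ ∀ x ∈ D, ∀ k ∈ K, x + N • k ∈ D

theorem exists_mul (K : AddSubgroup G) {F : Set (Set G)} (hF : F.Finite) (hD : ∀ D ∈ F, IsC D) :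
    ∃ m : ℕ, 0 < m ∧ ∀ D ∈ F, Big K D → ∀ x ∈ D, ∀ k ∈ K, x + m • k ∈ D := by
  induction F, hF using Set.Finite.induction_on with
  | empty => exact ⟨1, one_pos, by simp⟩
  | @insert D F _ _ ih =>
    obtain ⟨m, hm, h⟩ := ih fun D hd => hD D (Set.mem_insert_of_mem _ hd)
    by_cases hb : Big K D
    · obtain ⟨N, hN, hN'⟩ := hb
      refine ⟨m * N, Nat.mul_pos hm hN, ?_⟩
      rintro E (rfl | hE) hB x hx k hk
      · rw [mul_comm, mul_smul]
        exact hN' x hx _ (K.nsmul_mem hk m)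
      · rw [mul_smul]
        exact h E hE hB x hx _ (K.nsmul_mem hk N)
    · refine ⟨m, hm, ?_⟩
      rintro E (rfl | hE) hB
      · exact absurd hB hb
      · exact h E hE hB

open Pointwise in
/-- Neumann -/
theorem exists_big (K : AddSubgroup G) (x : G) {m : ℕ} (hm : 0 < m) {F : Set (Set G)}
    (hF : F.Finite) (hD : ∀ D ∈ F, IsC D) (hcov : ∀ k ∈ K, ∃ D ∈ F, x + m • k ∈ D) :
    ∃ D ∈ F, Big K D ∧ ∃ k ∈ K, x + m • k ∈ D := by
  classical
  let F' : Set (Set G) := {D ∈ F | ∃ k ∈ K, x + m • k ∈ D}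
  have hF' : F'.Finite := hF.subset fun _ h => h.1
  have hk : ∀ D : F', ∃ k : K, x + m • (k : G) ∈ D.1 := fun D => by
    obtain ⟨k, hk, h⟩ := D.2.2
    exact ⟨⟨k, hk⟩, h⟩
  choose g hg using hk
  have hH : ∀ D : F', ∃ H a, D.1 = cst a H := fun D => by
    obtain ⟨a, H, h⟩ := hD D D.2.1
    exact ⟨H, a, h⟩
  choose H a hH using hH
  have := hF'.fintype
  have hcovers : ⋃ D ∈ (Finset.univ : Finset F'),
      g D +ᵥ (((H D).comap ((nsmulAddMonoidHom m).comp K.subtype) : AddSubgroup K) : Set K)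
        = Set.univ := by
    apply Set.eq_univ_of_forall
    intro k
    obtain ⟨D, hDF, hkD⟩ := hcov k k.2
    let D' : F' := ⟨D, hDF, k, k.2, hkD⟩
    simp only [Finset.mem_univ, Set.iUnion_true, Set.mem_iUnion]
    refine ⟨D', ?_⟩
    rw [Set.mem_vadd_set_iff_neg_vadd_mem]
    have h1 := hg D'
    have h2 : x + m • (k : G) ∈ D'.1 := hkD
    rw [hH D', mem_cst] at h1 h2
    have h3 := (H D').sub_mem h2 h1
    simp only [vadd_eq_add, SetLike.mem_coe, AddSubgroup.mem_comap]
    convert h3 using 1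
    simp [smul_add]
    abel
  obtain ⟨D, -, hfi⟩ := AddSubgroup.exists_finiteIndex_of_leftCoset_cover hcovers
  refine ⟨D, D.2.1, ⟨_ * m, Nat.mul_pos (Nat.pos_of_ne_zero hfi.index_ne_zero) hm, ?_⟩, g D, (g D).2, hg D⟩
  intro y hy k hk
  have := AddSubgroup.nsmul_index_mem
    ((H D).comap ((nsmulAddMonoidHom m).comp K.subtype) : AddSubgroup K) ⟨k, hk⟩
  rw [hH D, mem_cst] at hy ⊢
  have h2 := (H D).add_mem hy this
  convert h2 using 1
  simp [mul_smul, smul_comm m]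
  abel

theorem image_cst (f : G →+ G') (a : G) (H : AddSubgroup G) :
    f '' cst a H = cst (f a) (H.map f) := by
  ext y
  simp only [Set.mem_image, mem_cst, AddSubgroup.mem_map]
  constructor
  · rintro ⟨x, hx, rfl⟩
    exact ⟨_, hx, by simp⟩
  · rintro ⟨h, hh, e⟩
    exact ⟨a + h, by simpa using hh, by simp [e]⟩

theorem IsC.image (f : G →+ G') {S : Set G} (h : IsC S) : IsC (f '' S) := by
  obtain ⟨a, H, rfl⟩ := h
  exact ⟨_, _, image_cst f a H⟩

theorem diff_split {T : Set G} {S : Set G} {X : Set G} {H' : AddSubgroup G}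
    (h : S = ⋃ b ∈ T, cst b H') : S \ X = ⋃₀ ((fun b => cst b H' \ X) '' T) := by
  subst h
  ext x
  simp
  tauto

theorem Basic.image [Module.Finite ℤ G] [IsAddTorsionFree G'] (f : G →+ G') {S : Set G}
    (hS : Basic S) : FU Basic (f '' S) := by
  obtain ⟨a, H, F, hF, hD, rfl⟩ := hS
  let K := f.ker ⊓ H
  obtain ⟨m, hm, hbig⟩ := exists_mul K hF hD
  obtain ⟨T, hT, hsplit⟩ := split_cst a H hm
  rw [diff_split hsplit, Set.sUnion_image, Set.image_iUnion₂, ← Set.sUnion_image]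
  refine FU.sUnion (hT.image _) ?_
  rintro _ ⟨b, hb, rfl⟩
  refine .base ⟨f b, (mul m H).map f,
    (fun D => f '' (D ∩ cst b (mul m H))) '' {D ∈ F | Big K D ∧ (D ∩ cst b (mul m H)).Nonempty},
    (hF.subset fun _ h => h.1).image _, ?_, ?_⟩
  · rintro _ ⟨D, ⟨hDF, -, c, hc⟩, rfl⟩
    obtain ⟨d, L, rfl⟩ := hD D hDF
    refine IsC.image f ⟨c, _, cst_inter _ _ _ _ hc⟩
  · rw [← image_cst]
    ext y
    constructor
    · rintro ⟨x, ⟨hx, hxF⟩, rfl⟩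
      refine ⟨⟨x, hx, rfl⟩, ?_⟩
      rintro ⟨_, ⟨D, ⟨hDF, hB, -⟩, rfl⟩, x', ⟨hx'D, hx'⟩, e⟩
      apply hxF
      refine ⟨D, hDF, ?_⟩
      rw [mem_cst] at hx hx'
      have h1 := (mul m H).sub_mem hx hx'
      obtain ⟨h, hh, e2⟩ := mem_mul.1 h1
      have h3 : f h = 0 := by
        have : m • f h = 0 := by rw [← map_nsmul, e2]; simp [e]
        exact (nsmul_eq_zero_iff_right hm.ne').1 this
      have h4 := hbig D hDF hB x' hx'D h ⟨h3, hh⟩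
      rw [e2] at h4
      simpa using h4
    · rintro ⟨⟨x, hx, rfl⟩, hn⟩
      by_contra hcon
      have hin : ∀ k ∈ K, x + m • k ∈ cst b (mul m H) := by
        intro k hk
        rw [mem_cst] at hx ⊢
        have := (mul m H).add_mem hx (mem_mul.2 ⟨k, hk.2, rfl⟩)
        convert this using 1
        abel
      have hf : ∀ k ∈ K, f (x + m • k) = f x := by
        intro k hk
        have : f k = 0 := hk.1
        simp [this]
      obtain ⟨D, hDF, hB, k, hk, hkD⟩ := exists_big K x hm hF hD (by
        intro k hk
        by_contra hc
        push Not at hc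
        refine hcon ⟨x + m • k, ⟨hin k hk, ?_⟩, hf k hk⟩
        rintro ⟨D, hDF, h⟩
        exact hc D hDF h)
      refine hn ⟨_, ⟨D, ⟨hDF, hB, _, hkD, hin k hk⟩, rfl⟩, _, ⟨hkD, hin k hk⟩, hf k hk⟩

theorem fu_image [Module.Finite ℤ G] [IsAddTorsionFree G'] (f : G →+ G') {S : Set G}
    (hS : FU Basic S) : FU Basic (f '' S) := FU.image f hS fun _ h => h.image f

end

section
variable {n : ℕ}

theorem finrank_lt (L H : AddSubgroup (Fin n → ℤ)) (hLH : L ≤ H)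
    (hn : ¬ ∃ N : ℕ, 0 < N ∧ ∀ h ∈ H, N • h ∈ L) : Module.finrank ℤ L < Module.finrank ℤ H := by
  have hfg : Module.Finite ℤ H :=
    inferInstanceAs (Module.Finite ℤ (AddSubgroup.toIntSubmodule H))
  have hfr : Module.Free ℤ H :=
    inferInstanceAs (Module.Free ℤ (AddSubgroup.toIntSubmodule H))
  let N : Submodule ℤ H := AddSubgroup.toIntSubmodule (L.addSubgroupOf H)
  have e : Module.finrank ℤ N = Module.finrank ℤ L :=
    LinearEquiv.finrank_eq (AddSubgroup.addSubgroupOfEquivOfLe hLH).toIntLinearEquiv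
  rw [← e]
  refine lt_of_le_of_ne (Submodule.finrank_le N) fun h => hn ?_
  have hfin : Finite (H ⧸ N) := (Submodule.finiteQuotient_iff N).2 h
  refine ⟨Nat.card (H ⧸ N), Nat.card_pos, fun h hh => ?_⟩
  have := AddSubgroup.nsmul_index_mem N.toAddSubgroup ⟨h, hh⟩
  exact AddSubgroup.mem_addSubgroupOf.1 this

theorem isCosetOfRank_cst (a : Fin n → ℤ) (H : AddSubgroup (Fin n → ℤ)) :
    IsCosetOfRank (Module.finrank ℤ H) (cst a H) := by
  refine ⟨a, H, rfl, ?_⟩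
  ext x
  simp only [mem_cst, Set.mem_image, SetLike.mem_coe]
  constructor
  · intro h
    exact ⟨_, h, by simp⟩
  · rintro ⟨h, hh, rfl⟩
    simpa using hh

theorem setRank_lt {k : ℕ} {F : Set (Set (Fin n → ℤ))} (hF : F.Finite)
    (h : ∀ D ∈ F, ∃ i < k, IsCosetOfRank i D) : setRank (⋃₀ F) < k := by
  unfold setRank
  split_ifs with h0
  · omega
  · obtain ⟨x, D, hD, -⟩ := Set.nonempty_iff_ne_empty.2 h0
    have hk : 0 < k := by
      obtain ⟨i, hi, -⟩ := h D hD
      omega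
    have : CoveredByRank (⋃₀ F) (k - 1) := by
      have hfin := hF.to_subtype
      obtain ⟨m, ⟨e⟩⟩ := Finite.exists_equiv_fin F
      refine ⟨m, fun i => (e.symm i : Set (Fin n → ℤ)), fun i => ?_, ?_⟩
      · obtain ⟨j, hj, hj'⟩ := h _ (e.symm i).2
        exact ⟨j, by omega, hj'⟩
      · rintro x ⟨D, hD, hx⟩
        exact Set.mem_iUnion.2 ⟨e ⟨D, hD⟩, by simpa using hx⟩
    have h2 : sInf {k : ℕ | CoveredByRank (⋃₀ F) k} ≤ k - 1 := Nat.sInf_le this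
    have : sInf {k : ℕ | CoveredByRank (⋃₀ F) k} < k := by omega
    exact_mod_cast this

theorem basic_quasi (hdef : ∀ S : Set (Fin n → ℤ), IsC S → IsGroupDefinable S)
    {S : Set (Fin n → ℤ)} (hS : Basic S) : FU (fun Q => ∃ k, IsQuasiCoset k Q) S := by
  obtain ⟨a, H, F, hF, hD, rfl⟩ := hS
  obtain ⟨m, hm, hbig⟩ := exists_mul H hF hD
  obtain ⟨T, hT, hsplit⟩ := split_cst a H hm
  rw [diff_split hsplit]
  refine FU.sUnion (hT.image _) ?_
  rintro _ ⟨b, hb, rfl⟩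
  by_cases hex : ∃ D ∈ F, Big H D ∧ (D ∩ cst b (mul m H)).Nonempty
  · obtain ⟨D, hDF, hB, c, hcD, hc⟩ := hex
    have : cst b (mul m H) \ ⋃₀ F = ∅ := by
      apply Set.eq_empty_of_forall_notMem
      rintro x ⟨hx, hxF⟩
      apply hxF
      refine ⟨D, hDF, ?_⟩
      obtain ⟨h, hh, e⟩ := mem_mul.1 ((mul m H).sub_mem hx hc)
      have := hbig D hDF hB c hcD h hh
      rw [e] at this
      simpa using this
    simp only [this]
    exact .empty
  · let E : Set (Set (Fin n → ℤ)) := (fun D => D ∩ cst b (mul m H)) ''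
      {D ∈ F | (D ∩ cst b (mul m H)).Nonempty}
    have hE : E.Finite := (hF.subset fun _ h => h.1).image _
    have hEC : ∀ D ∈ E, IsC D ∧ ∃ i < Module.finrank ℤ (mul m H), IsCosetOfRank i D := by
      rintro _ ⟨D, ⟨hDF, c, hc⟩, rfl⟩
      have hnb : ¬ Big H D := fun hB => hex ⟨D, hDF, hB, c, hc⟩
      obtain ⟨d, L, rfl⟩ := hD D hDF
      simp only [cst_inter _ _ _ _ hc]
      refine ⟨⟨_, _, rfl⟩, _, finrank_lt _ _ inf_le_right ?_, isCosetOfRank_cst _ _⟩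
      rintro ⟨N, hN, h⟩
      refine hnb ⟨N * m, Nat.mul_pos hN hm, fun x hx k hk => ?_⟩
      have h1 := (h (m • k) (mem_mul.2 ⟨k, hk, rfl⟩)).1
      rw [mem_cst] at hx ⊢
      have h2 := L.add_mem hx h1
      convert h2 using 1
      rw [mul_smul]
      abel
    refine .base ⟨_, cst b (mul m H), ⋃₀ E, isCosetOfRank_cst _ _, ?_, ?_,
      setRank_lt hE fun D hD => (hEC D hD).2, ?_⟩
    · rintro x ⟨_, ⟨D, -, rfl⟩, h⟩
      exact h.2
    · have hfin := hE.to_subtype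
      rw [Set.sUnion_eq_iUnion]
      exact Set.definable_iUnion_of_finite fun D : E => hdef _ (hEC _ D.2).1
    · ext x
      constructor
      · rintro ⟨h1, h2⟩
        refine ⟨h1, ?_⟩
        rintro ⟨_, ⟨D, ⟨hDF, -⟩, rfl⟩, h⟩
        exact h2 ⟨D, hDF, h.1⟩
      · rintro ⟨h1, h2⟩
        refine ⟨h1, ?_⟩
        rintro ⟨D, hDF, h⟩
        exact h2 ⟨_, ⟨D, ⟨hDF, x, h, h1⟩, rfl⟩, h, h1⟩

end

section logic
open FirstOrder Language

theorem term_affine {α : Type*} (t : LangGrp[[(Set.univ : Set ℤ)]].Term α) :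
    ∃ (c : ℤ) (f : (α → ℤ) →+ ℤ), ∀ v : α → ℤ, t.realize v = c + f v := by
  induction t with
  | var i => exact ⟨0, Pi.evalAddMonoidHom (fun _ => ℤ) i, fun v => by simp⟩
  | @func l f ts ih =>
    choose c g ih using ih
    cases f with
    | inl f =>
      match l, f with
      | 0, f => exact ⟨0, 0, fun v => by
          rfl⟩
      | 2, f =>
        refine ⟨c 0 + c 1, g 0 + g 1, fun v => ?_⟩
        have : (ts 0).realize v + (ts 1).realize v = c 0 + c 1 + (g 0 + g 1) v := by
          rw [ih, ih]; simp; ring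
        exact this
    | inr f =>
      cases l with
      | zero =>
        refine ⟨f.1, 0, fun v => ?_⟩
        have : (f.1 : ℤ) = f.1 + (0 : (α → ℤ) →+ ℤ) v := by simp
        exact this
      | succ => nomatch f

theorem fu_formula {α : Type} [Finite α] {n : ℕ}
    (φ : LangGrp[[(Set.univ : Set ℤ)]].BoundedFormula α n) :
    FU Basic {v : α ⊕ Fin n → ℤ | φ.Realize (v ∘ Sum.inl) (v ∘ Sum.inr)} := by
  induction φ with
  | falsum =>
    convert! FU.empty using 1
  | @equal n t₁ t₂ =>
    obtain ⟨c, f, hf⟩ := term_affine t₁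
    obtain ⟨d, g, hg⟩ := term_affine t₂
    have key : {v : α ⊕ Fin n → ℤ | (BoundedFormula.equal t₁ t₂).Realize (v ∘ Sum.inl) (v ∘ Sum.inr)}
        = {v | c + f v = d + g v} := by
      ext v
      simp only [BoundedFormula.Realize, Set.mem_ofPred_eq, hf, hg, Sum.elim_comp_inl_inr]
    rw [key]
    by_cases hc : ∃ v0, c + f v0 = d + g v0
    · obtain ⟨v0, hv0⟩ := hc
      convert FU.base (basic_cst v0 (f - g).ker) using 1
      ext v
      simp only [Set.mem_ofPred_eq, mem_cst, AddMonoidHom.mem_ker, AddMonoidHom.sub_apply, map_sub]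
      constructor <;> intro h <;> linarith
    · convert! FU.empty using 1
      apply Set.eq_empty_of_forall_notMem
      exact fun v hv => hc ⟨v, hv⟩
  | rel R ts => 
    cases R with
    | inl R => nomatch R
    | inr R => nomatch R
  | imp _ _ ih₁ ih₂ =>
    convert! fu_compl (ih₁.inter (fu_compl ih₂)) using 1
    ext v
    simp
  | @all n φ ih =>
    let f : (α ⊕ Fin (n+1) → ℤ) →+ (α ⊕ Fin n → ℤ) :=
      { toFun := fun v => v ∘ Sum.map id Fin.castSucc
        map_zero' := rfl
        map_add' := fun _ _ => rfl }
    convert! fu_compl (fu_image f (fu_compl ih)) using 1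
    ext v
    simp only [BoundedFormula.realize_all, Set.mem_compl_iff, Set.mem_image, Set.mem_ofPred_eq]
    constructor
    · rintro h ⟨w, hw, rfl⟩
      apply hw
      convert! h (w (Sum.inr (Fin.last n))) using 1
      ext i
      cases i using Fin.lastCases <;> simp [f]
    · intro h a
      by_contra hc
      apply h
      refine ⟨Sum.elim (v ∘ Sum.inl) (Fin.snoc (v ∘ Sum.inr) a), ?_, ?_⟩
      · simpa using hc
      · ext i
        cases i <;> simp [f]

theorem fu_definable {n : ℕ} {A : Set (Fin n → ℤ)} (h : IsGroupDefinable A) : FU Basic A := by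
  obtain ⟨φ, rfl⟩ := h
  let f : (Fin n ⊕ Fin 0 → ℤ) →+ (Fin n → ℤ) :=
      { toFun := fun v => v ∘ Sum.inl
        map_zero' := rfl
        map_add' := fun _ _ => rfl }
  convert! fu_image f (fu_formula φ) using 1
  ext v
  simp only [Set.mem_image, Set.mem_ofPred_eq]
  constructor
  · intro h
    refine ⟨Sum.elim v default, ?_, ?_⟩
    · unfold Formula.Realize at h
      convert h using 2
      exact Sum.elim_comp_inl _ _
    · ext i; simp [f]
  · rintro ⟨w, hw, rfl⟩
    unfold Formula.Realize
    convert hw using 2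
    rfl

/-- functions given by terms -/
def termFun (α : Type) : AddSubmonoid ((α → ℤ) → ℤ) where
  carrier := {f | ∃ t : LangGrp[[(Set.univ : Set ℤ)]].Term α, ∀ v, t.realize v = f v}
  zero_mem' := ⟨(LangGrp.con (⟨0, trivial⟩ : (Set.univ : Set ℤ))).term, fun v => Term.realize_con⟩
  add_mem' := by
    rintro f g ⟨t, ht⟩ ⟨s, hs⟩
    refine ⟨Term.func (l := 2) (Sum.inl ()) ![t, s], fun v => ?_⟩
    have : t.realize v + s.realize v = (f + g) v := by simp [ht, hs]
    exact this

theorem const_mem_termFun {α : Type} (c : ℤ) : (fun _ => c) ∈ termFun α :=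
  ⟨(LangGrp.con (⟨c, trivial⟩ : (Set.univ : Set ℤ))).term, fun _ => Term.realize_con⟩

theorem var_mem_termFun {α : Type} (i : α) : (fun v => v i) ∈ termFun α :=
  ⟨Term.var i, fun _ => rfl⟩

theorem definable_eq {α : Type} {f g : (α → ℤ) → ℤ} (hf : f ∈ termFun α) (hg : g ∈ termFun α) :
    Set.Definable (Set.univ : Set ℤ) LangGrp {v : α → ℤ | f v = g v} := by
  obtain ⟨t, ht⟩ := hf
  obtain ⟨s, hs⟩ := hg
  refine ⟨t.equal s, ?_⟩
  ext v
  simp [← ht, ← hs, Formula.realize_equal]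

theorem definable_isC {n : ℕ} {S : Set (Fin n → ℤ)} (h : IsC S) : IsGroupDefinable S := by
  obtain ⟨a, H, rfl⟩ := h
  have hfg : (AddSubgroup.toIntSubmodule H).FG := IsNoetherian.noetherian _
  obtain ⟨m, g, hg⟩ := Submodule.fg_iff_exists_fin_generating_family.1 hfg
  have hset : cst a H = (fun w : Fin n ⊕ Fin m → ℤ => w ∘ Sum.inl) ''
      ⋂ i : Fin n, {w : Fin n ⊕ Fin m → ℤ |
        w (Sum.inl i) + ∑ j, (-(g j i)).toNat • w (Sum.inr j) =
          a i + ∑ j, (g j i).toNat • w (Sum.inr j)} := by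
    have key : ∀ w : Fin n ⊕ Fin m → ℤ, (w ∈ ⋂ i : Fin n, {w : Fin n ⊕ Fin m → ℤ |
        w (Sum.inl i) + ∑ j, (-(g j i)).toNat • w (Sum.inr j) =
          a i + ∑ j, (g j i).toNat • w (Sum.inr j)}) ↔
        w ∘ Sum.inl - a = ∑ j, w (Sum.inr j) • g j := by
      intro w
      simp only [Set.mem_iInter, Set.mem_ofPred_eq, funext_iff]
      refine forall_congr' fun i => ?_
      have : ∑ j, w (Sum.inr j) * g j i = 
          ∑ j, (g j i).toNat • w (Sum.inr j) - ∑ j, (-(g j i)).toNat • w (Sum.inr j) := by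
        rw [← Finset.sum_sub_distrib]
        refine Finset.sum_congr rfl fun j _ => ?_
        simp only [nsmul_eq_mul]
        rw [← sub_mul, Int.toNat_sub_toNat_neg, mul_comm]
      simp only [Pi.sub_apply, Function.comp_apply, Finset.sum_apply, Pi.smul_apply, smul_eq_mul,
        this]
      constructor <;> intro h <;> linarith
    ext x
    have hx : x ∈ cst a H ↔ x - a ∈ Submodule.span ℤ (Set.range g) := by
      rw [hg]; rfl
    rw [hx, Submodule.mem_span_range_iff_exists_fun]
    constructor
    · rintro ⟨c, hc⟩
      exact ⟨Sum.elim x c, (key _).2 hc.symm, by simp⟩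
    · rintro ⟨w, hw, rfl⟩
      exact ⟨fun j => w (Sum.inr j), ((key w).1 hw).symm⟩
  rw [hset]
  refine Set.Definable.image_comp (Set.definable_iInter_of_finite fun i => ?_) _
  have hsum : ∀ c : Fin m → ℕ, (fun w : Fin n ⊕ Fin m → ℤ => ∑ j, c j • w (Sum.inr j)) ∈
      termFun (Fin n ⊕ Fin m) := by
    intro c
    have := (termFun (Fin n ⊕ Fin m)).sum_mem (t := Finset.univ) (f := fun j w => c j • w (Sum.inr j))
      fun j _ => (termFun (Fin n ⊕ Fin m)).nsmul_mem (var_mem_termFun (Sum.inr j)) (c j)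
    convert! this using 1
    ext w
    simp
  exact definable_eq
    ((termFun _).add_mem (var_mem_termFun (Sum.inl i)) (hsum _))
    ((termFun _).add_mem (const_mem_termFun (a i)) (hsum _))

end logic

end QC

/-- every nonempty `(ℤ,+,0)`-definable subset of `ℤⁿ` is a finite union of
quasi-cosets. -/
theorem stmt9 {n : ℕ} (A : Set (Fin n → ℤ)) (hA : A.Nonempty) (hdef : IsGroupDefinable A) :
    ∃ (m : ℕ) (Q : Fin m → Set (Fin n → ℤ)),
      (∀ i, ∃ k, IsQuasiCoset k (Q i)) ∧ A = ⋃ i, Q i :=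
  ((QC.fu_definable hdef).bind fun _ h =>
    QC.basic_quasi (fun _ h => QC.definable_isC h) h).exists_fin
end

section
/- If Q, P_1, ..., P_k are closed convex sets in R^n with nonempty interior and Q ⊆ P_1 ∪ ... ∪ P_k, then the inradius of Q is at most the sum of the inradii of the P_i. -/
open scoped ENNReal

/-- The inradius of a subset of `ℝⁿ`: the supremum of radii of closed balls contained in it
(possibly `∞`). -/
noncomputable def inradius {n : ℕ} (P : Set (EuclideanSpace ℝ (Fin n))) : ℝ≥0∞ :=
  ⨆ (x : EuclideanSpace ℝ (Fin n)) (r : NNReal) (_ : Metric.closedBall x (r : ℝ) ⊆ P),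
    (r : ℝ≥0∞)

open scoped RealInnerProductSpace in
/-- If no closed ball of radius `r` lies in `P`, each point is `r`-separated by a supporting
half-space. -/
lemma kadets_sep {n : ℕ} (P : Set (EuclideanSpace ℝ (Fin n))) (hconv : Convex ℝ P)
    (hcl : IsClosed P) (hne : P.Nonempty) (r : ℝ) (s : EuclideanSpace ℝ (Fin n))
    (hs : ¬ Metric.closedBall s r ⊆ P) :
    ∃ p : EuclideanSpace ℝ (Fin n) × ℝ, ‖p.1‖ = 1 ∧ (∀ x ∈ P, ⟪p.1, x⟫ ≤ p.2) ∧
      p.2 - r < ⟪p.1, s⟫ := by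
  obtain ⟨y, hy, hyP⟩ := Set.not_subset.1 hs
  obtain ⟨f, t, hf, ht⟩ := geometric_hahn_banach_closed_point hconv hcl hyP
  set w := (InnerProductSpace.toDual ℝ _).symm f with hw
  have hfw : ∀ x, f x = ⟪w, x⟫ := fun x => by
    rw [hw, InnerProductSpace.toDual_symm_apply]
  have hw0 : w ≠ 0 := by
    intro h0
    obtain ⟨a, ha⟩ := hne
    have h1 := hf a ha
    rw [hfw, h0, inner_zero_left] at h1 ht
    linarith
  have hwn : 0 < ‖w‖ := norm_pos_iff.2 hw0
  have hu : ‖(‖w‖⁻¹ : ℝ) • w‖ = 1 := by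
    rw [norm_smul, norm_inv, norm_norm, inv_mul_cancel₀ hwn.ne']
  have hin : ∀ x, ⟪(‖w‖⁻¹ : ℝ) • w, x⟫ = ‖w‖⁻¹ * f x := fun x => by
    rw [real_inner_smul_left, hfw]
  refine ⟨((‖w‖⁻¹ : ℝ) • w, ‖w‖⁻¹ * t), hu, ?_, ?_⟩
  · intro x hx
    simp only [hin]
    exact mul_le_mul_of_nonneg_left (hf x hx).le (by positivity)
  · have h1 : ‖w‖⁻¹ * t < ⟪(‖w‖⁻¹ : ℝ) • w, y⟫ := by
      rw [hin]
      exact mul_lt_mul_of_pos_left ht (by positivity)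
    have h2 : ⟪(‖w‖⁻¹ : ℝ) • w, y - s⟫ ≤ r := by
      refine (real_inner_le_norm _ _).trans ?_
      rw [hu, one_mul, ← dist_eq_norm]
      exact hy
    rw [inner_sub_right] at h2
    show ‖w‖⁻¹ * t - r < ⟪(‖w‖⁻¹ : ℝ) • w, s⟫
    linarith

open scoped RealInnerProductSpace in
/-- Finite version of `kadets_sep`, by compactness. -/
lemma kadets_fin {n : ℕ} (P : Set (EuclideanSpace ℝ (Fin n))) (hconv : Convex ℝ P)
    (hcl : IsClosed P) (hne : P.Nonempty) (r : ℝ)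
    (hs : ∀ s, ¬ Metric.closedBall s r ⊆ P) (c : EuclideanSpace ℝ (Fin n)) (R : ℝ) :
    ∃ V : Finset (EuclideanSpace ℝ (Fin n) × ℝ),
      (∀ p ∈ V, ‖p.1‖ = 1 ∧ (∀ x ∈ P, ⟪p.1, x⟫ ≤ p.2)) ∧
      ∀ s ∈ Metric.closedBall c R, ∃ p ∈ V, p.2 - r < ⟪p.1, s⟫ := by
  classical
  choose g hg1 hg2 hg3 using fun s => kadets_sep P hconv hcl hne r s (hs s)
  obtain ⟨t, -, ht⟩ := (isCompact_closedBall c R).elim_nhds_subcover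
    (fun s => {x | (g s).2 - r < ⟪(g s).1, x⟫}) (fun s _ =>
      (isOpen_lt continuous_const (by fun_prop)).mem_nhds (hg3 s))
  refine ⟨t.image g, ?_, ?_⟩
  · intro p hp
    obtain ⟨s, -, rfl⟩ := Finset.mem_image.1 hp
    exact ⟨hg1 s, hg2 s⟩
  · intro s hs
    obtain ⟨a, ha, hsa⟩ := Set.mem_iUnion₂.1 (ht hs)
    exact ⟨g a, Finset.mem_image_of_mem _ ha, hsa⟩

open scoped RealInnerProductSpace in
/-- Bang-type argument. -/
lemma kadets_bang {n k : ℕ} (P : Fin k → Set (EuclideanSpace ℝ (Fin n)))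
    (hconv : ∀ i, Convex ℝ (P i)) (hcl : ∀ i, IsClosed (P i)) (hne : ∀ i, (P i).Nonempty)
    (r : Fin k → ℝ) (hr : ∀ i, 0 < r i)
    (hs : ∀ i s, ¬ Metric.closedBall s (r i) ⊆ P i) (c : EuclideanSpace ℝ (Fin n)) :
    ∃ x ∈ Metric.closedBall c (∑ i, r i), ∀ i, x ∉ P i := by
  classical
  choose V hV1 hV2 using fun i =>
    kadets_fin (P i) (hconv i) (hcl i) (hne i) (r i) (hs i) c (∑ i, r i)
  have hR : 0 ≤ ∑ i, r i := Finset.sum_nonneg fun i _ => (hr i).le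
  have hVne : ∀ i, (V i).Nonempty := fun i => by
    obtain ⟨p, hp, -⟩ := hV2 i c (Metric.mem_closedBall_self hR)
    exact ⟨p, hp⟩
  obtain ⟨j, hj, hmax⟩ := (Fintype.piFinset V).exists_max_image
    (fun j => ‖c + ∑ i, r i • (j i).1‖ ^ 2 - 2 * ∑ i, r i * (j i).2)
    (Fintype.piFinset_nonempty.2 hVne)
  rw [Fintype.mem_piFinset] at hj
  refine ⟨c + ∑ i, r i • (j i).1, ?_, ?_⟩
  · rw [mem_closedBall_iff_norm, add_sub_cancel_left]
    refine (norm_sum_le _ _).trans (Finset.sum_le_sum fun i _ => ?_)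
    rw [norm_smul, (hV1 i _ (hj i)).1, mul_one, Real.norm_of_nonneg (hr i).le]
  · intro i hx
    have hxi := (hV1 i _ (hj i)).2 _ hx
    set s := c + ∑ l ∈ Finset.univ.erase i, r l • (j l).1 with hsdef
    have hsR : s ∈ Metric.closedBall c (∑ i, r i) := by
      rw [mem_closedBall_iff_norm, hsdef, add_sub_cancel_left]
      refine (norm_sum_le _ _).trans ((Finset.sum_le_sum fun l _ => ?_).trans
        (Finset.sum_le_sum_of_subset_of_nonneg (Finset.erase_subset i _)
          fun l _ _ => (hr l).le))
      rw [norm_smul, (hV1 l _ (hj l)).1, mul_one, Real.norm_of_nonneg (hr l).le]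
    obtain ⟨p, hp, hps⟩ := hV2 i s hsR
    have key : ∀ q, ‖q.1‖ = 1 →
        ‖c + ∑ l, r l • (Function.update j i q l).1‖ ^ 2
          - 2 * ∑ l, r l * (Function.update j i q l).2 =
        ‖s‖ ^ 2 + 2 * r i * (⟪q.1, s⟫ - q.2) + r i ^ 2
          - 2 * ∑ l ∈ Finset.univ.erase i, r l * (j l).2 := by
      intro q hq
      rw [← Finset.add_sum_erase _ _ (Finset.mem_univ i),
        ← Finset.add_sum_erase _ (fun l => r l * (Function.update j i q l).2)
          (Finset.mem_univ i)]
      rw [Finset.sum_congr rfl (g := fun l => r l • (j l).1) (fun l hl => by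
          rw [Function.update_of_ne (Finset.ne_of_mem_erase hl)]),
        Finset.sum_congr rfl (g := fun l => r l * (j l).2) (fun l hl => by
          rw [Function.update_of_ne (Finset.ne_of_mem_erase hl)])]
      simp only [Function.update_self]
      rw [add_left_comm, ← hsdef, norm_add_sq_real, norm_smul, hq, real_inner_smul_left,
        Real.norm_of_nonneg (hr i).le]
      ring
    have h1 := hmax (Function.update j i p) (by
      rw [Fintype.mem_piFinset]
      intro l
      by_cases h : l = i
      · subst h; simpa using hp
      · simpa [h] using hj l)
    have h2 := key (j i) (hV1 i _ (hj i)).1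
    rw [Function.update_eq_self] at h2
    rw [key p (hV1 i p hp).1, h2] at h1
    have h3 : ⟪p.1, s⟫ - p.2 ≤ ⟪(j i).1, s⟫ - (j i).2 :=
      le_of_mul_le_mul_left (by linarith) (mul_pos two_pos (hr i))
    rw [← Finset.add_sum_erase _ _ (Finset.mem_univ i), add_left_comm, ← hsdef,
      inner_add_right, real_inner_smul_right, real_inner_self_eq_norm_sq,
      (hV1 i _ (hj i)).1] at hxi
    linarith

/-- Kadets: if closed convex sets with nonempty interior cover a closed convex set
with nonempty interior, the inradius of the covered set is at most the sum of the inradii. -/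
theorem stmt11 {n k : ℕ} (Q : Set (EuclideanSpace ℝ (Fin n)))
    (P : Fin k → Set (EuclideanSpace ℝ (Fin n)))
    (hQconv : Convex ℝ Q) (hQcl : IsClosed Q) (hQint : (interior Q).Nonempty)
    (hPconv : ∀ i, Convex ℝ (P i)) (hPcl : ∀ i, IsClosed (P i))
    (hPint : ∀ i, (interior (P i)).Nonempty)
    (hcover : Q ⊆ ⋃ i, P i) :
    inradius Q ≤ ∑ i, inradius (P i) := by
  by_contra hcon
  rw [not_le] at hcon
  have hcon' := hcon
  unfold inradius at hcon
  simp only [lt_iSup_iff] at hcon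
  obtain ⟨c, R, hcR, hlt⟩ := hcon
  change ∑ i, inradius (P i) < (R : ℝ≥0∞) at hlt
  have hfin : ∀ i, inradius (P i) ≠ ∞ := fun i =>
    ((Finset.single_le_sum (fun _ _ => zero_le) (Finset.mem_univ i)).trans_lt
      (hlt.trans ENNReal.coe_lt_top)).ne
  obtain ⟨ρ, hρ⟩ : ∃ ρ : Fin k → NNReal, ∀ i, inradius (P i) = ρ i :=
    ⟨fun i => (inradius (P i)).toNNReal, fun i => (ENNReal.coe_toNNReal (hfin i)).symm⟩
  simp only [hρ] at hlt
  have hlt2 : ∑ i, ρ i < R := by exact_mod_cast hlt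
  have hlt3 : ∑ i, (ρ i : ℝ) < R := by exact_mod_cast hlt2
  set ε : ℝ := (R - ∑ i, (ρ i : ℝ)) / (k + 1) with hε
  have hεpos : 0 < ε := div_pos (by linarith) (by positivity)
  obtain ⟨x, hx, hxP⟩ := kadets_bang P hPconv hPcl (fun i => (hPint i).mono interior_subset)
    (fun i => ρ i + ε) (fun i => add_pos_of_nonneg_of_pos (ρ i).2 hεpos) (by
      intro i s hsub
      obtain ⟨δ, hδ⟩ : ∃ δ : NNReal, (δ : ℝ) = ρ i + ε :=
        ⟨Real.toNNReal (ρ i + ε),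
          Real.coe_toNNReal _ (add_pos_of_nonneg_of_pos (ρ i).2 hεpos).le⟩
      have hle : (δ : ℝ≥0∞) ≤ inradius (P i) := by
        unfold inradius
        exact le_iSup_of_le s (le_iSup_of_le δ (le_iSup_of_le (by rw [hδ]; exact hsub) le_rfl))
      rw [hρ, ENNReal.coe_le_coe, ← NNReal.coe_le_coe, hδ] at hle
      linarith) c
  have hsum : ∑ i, ((ρ i : ℝ) + ε) ≤ R := by
    rw [Finset.sum_add_distrib, Finset.sum_const, Finset.card_univ, Fintype.card_fin,
      nsmul_eq_mul]
    have : (k + 1) * ε = R - ∑ i, (ρ i : ℝ) := by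
      rw [hε]; field_simp
    linarith
  obtain ⟨i, hi⟩ := Set.mem_iUnion.1 (hcover (hcR (Metric.closedBall_subset_closedBall hsum hx)))
  exact hxP i hi
end

section
/- Suppose A ⊆ Z^{n+1} is definable in (Z,+,<,0). Then A can be written as a finite union of sets of the form {(x̄, y) : x̄ ∈ X_t, f_t(x̄) ≤ y ≤ g_t(x̄), y ≡ c_t (mod m_t)}, where each X_t ⊆ Z^n is definable in (Z,+,<,0), f_t and g_t are Z-linear functions (standard Z-linear or identically ±∞) with X_t contained in their domains, and 0 ≤ c_t < m_t. -/
open FirstOrder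

/-- `ℤ ∪ {-∞, +∞}`. -/
abbrev ZBar : Type := WithBot (WithTop ℤ)

/-- The inclusion of `ℤ` into `ℤ ∪ {-∞, +∞}`. -/
def toZBar (k : ℤ) : ZBar := ((k : WithTop ℤ) : ZBar)

/-- A standard `ℤ`-linear partial function: its domain is a coset `c̄ + m̄ℤⁿ` and on the domain
it is given by `f(x̄) = u + ∑ aᵢ (xᵢ - cᵢ)/mᵢ`. -/
def IsStdZLinear {n : ℕ} (dom : Set (Fin n → ℤ)) (f : (Fin n → ℤ) → ℤ) : Prop :=
  ∃ (u : ℤ) (a c mv : Fin n → ℤ),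
    (∀ i, 0 < mv i ∧ 0 ≤ c i ∧ c i < mv i) ∧
    dom = {x | ∀ i, mv i ∣ (x i - c i)} ∧
    ∀ x ∈ dom, f x = u + ∑ i, a i * ((x i - c i) / mv i)

/-- A `ℤ`-linear function: either extreme (constantly `-∞` or `+∞`, with domain all of `ℤⁿ`) or
standard `ℤ`-linear. -/
def IsZLinear {n : ℕ} (dom : Set (Fin n → ℤ)) (F : (Fin n → ℤ) → ZBar) : Prop :=
  (dom = Set.univ ∧ ∀ x, F x = ⊥) ∨ (dom = Set.univ ∧ ∀ x, F x = ⊤) ∨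
    (∃ f : (Fin n → ℤ) → ℤ, IsStdZLinear dom f ∧ ∀ x ∈ dom, F x = toZBar (f x))


open Set

/-- Affine integer-valued functions. -/
def IsAff {α : Type} [Fintype α] (t : (α → ℤ) → ℤ) : Prop :=
  ∃ (u : ℤ) (a : α → ℤ), ∀ x, t x = u + ∑ i, a i * x i

section aff
variable {α β : Type} [Fintype α] [Fintype β]

theorem IsAff.const (u : ℤ) : IsAff (fun _ : α → ℤ => u) := ⟨u, 0, by simp⟩

theorem IsAff.coord (i : α) : IsAff (fun x : α → ℤ => x i) := by
  classical
  exact ⟨0, Pi.single i 1, by simp [Pi.single_apply]⟩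

theorem IsAff.add {s t : (α → ℤ) → ℤ} (hs : IsAff s) (ht : IsAff t) :
    IsAff (fun x => s x + t x) := by
  obtain ⟨u, a, h⟩ := hs
  obtain ⟨v, b, k⟩ := ht
  refine ⟨u + v, a + b, fun x => ?_⟩
  simp [h, k, add_mul, Finset.sum_add_distrib]
  ring

theorem IsAff.smul (c : ℤ) {s : (α → ℤ) → ℤ} (hs : IsAff s) :
    IsAff (fun x => c * s x) := by
  obtain ⟨u, a, h⟩ := hs
  refine ⟨c * u, fun i => c * a i, fun x => ?_⟩
  simp [h, mul_add, Finset.mul_sum, mul_assoc]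

theorem IsAff.sub {s t : (α → ℤ) → ℤ} (hs : IsAff s) (ht : IsAff t) :
    IsAff (fun x => s x - t x) := by
  have := hs.add (ht.smul (-1))
  simpa [sub_eq_add_neg] using this

theorem IsAff.sum {ι : Type} (S : Finset ι) {s : ι → (α → ℤ) → ℤ} (hs : ∀ i, IsAff (s i)) :
    IsAff (fun x => ∑ i ∈ S, s i x) := by
  classical
  induction S using Finset.induction_on with
  | empty => simpa using IsAff.const 0
  | insert i S hi ih => simpa [Finset.sum_insert hi] using (hs i).add ih

theorem IsAff.reindex (f : α → β) {s : (α → ℤ) → ℤ} (hs : IsAff s) :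
    IsAff (fun x : β → ℤ => s (x ∘ f)) := by
  obtain ⟨u, a, h⟩ := hs
  simp only [h]
  exact (IsAff.const u).add (IsAff.sum _ fun i => (IsAff.coord (f i)).smul (a i))
end aff

/-- Quantifier-free definable sets. -/
inductive Basic {α : Type} [Fintype α] : Set (α → ℤ) → Prop
  | nonneg {t : (α → ℤ) → ℤ} (ht : IsAff t) : Basic {x | 0 ≤ t x}
  | dvd {t : (α → ℤ) → ℤ} (d : ℤ) (hd : 0 < d) (ht : IsAff t) : Basic {x | d ∣ t x}
  | inter {s t : Set (α → ℤ)} (hs : Basic s) (ht : Basic t) : Basic (s ∩ t)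
  | union {s t : Set (α → ℤ)} (hs : Basic s) (ht : Basic t) : Basic (s ∪ t)

section basic
variable {α β : Type} [Fintype α] [Fintype β]

theorem Basic.empty : Basic (∅ : Set (α → ℤ)) := by
  have := Basic.nonneg (IsAff.const (α := α) (-1))
  convert this using 1
  ext; simp

theorem Basic.univ : Basic (Set.univ : Set (α → ℤ)) := by
  have := Basic.nonneg (IsAff.const (α := α) 0)
  convert this using 1
  ext; simp

theorem Basic.biUnion {ι : Type} (S : Finset ι) {s : ι → Set (α → ℤ)} (hs : ∀ i, Basic (s i)) :
    Basic (⋃ i ∈ S, s i) := by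
  classical
  induction S using Finset.induction_on with
  | empty => simpa using Basic.empty
  | insert i S hi ih => simpa [Finset.set_biUnion_insert] using (hs i).union ih

theorem Basic.le {s t : (α → ℤ) → ℤ} (hs : IsAff s) (ht : IsAff t) :
    Basic {x | s x ≤ t x} := by
  have := Basic.nonneg (ht.sub hs)
  simpa using this

theorem Basic.compl {s : Set (α → ℤ)} (hs : Basic s) : Basic sᶜ := by
  induction hs with
  | nonneg ht =>
    convert Basic.le (ht.add (.const 1)) (.const 0) using 1
    ext x; simp
  | @dvd t d hd ht =>
    convert Basic.biUnion (Finset.Ioo 0 d) (fun j => Basic.dvd d hd (ht.sub (.const j))) using 1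
    ext x
    simp only [mem_compl_iff, mem_ofPred_eq, mem_iUnion, Finset.mem_Ioo, exists_prop]
    constructor
    · intro h
      refine ⟨t x % d, ⟨?_, Int.emod_lt_of_pos _ hd⟩, Int.dvd_self_sub_emod⟩
      have := Int.emod_nonneg (t x) hd.ne'
      have h2 : t x % d ≠ 0 := fun h3 => h (Int.dvd_of_emod_eq_zero h3)
      omega
    · rintro ⟨j, ⟨h1, h2⟩, h3⟩ h4
      have := (Int.dvd_iff_dvd_of_dvd_sub h3).1 h4
      exact absurd (Int.le_of_dvd h1 this) (by omega)
  | inter _ _ h1 h2 => rw [Set.compl_inter]; exact h1.union h2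
  | union _ _ h1 h2 => rw [Set.compl_union]; exact h1.inter h2

theorem Basic.eq {s t : (α → ℤ) → ℤ} (hs : IsAff s) (ht : IsAff t) :
    Basic {x | s x = t x} := by
  convert (Basic.le hs ht).inter (Basic.le ht hs) using 1
  ext x; simp [le_antisymm_iff]

theorem Basic.reindex (f : α → β) {s : Set (α → ℤ)} (hs : Basic s) :
    Basic {x : β → ℤ | x ∘ f ∈ s} := by
  induction hs with
  | nonneg ht => exact .nonneg (ht.reindex f)
  | dvd d hd ht => exact .dvd d hd (ht.reindex f)
  | inter _ _ h1 h2 => exact h1.inter h2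
  | union _ _ h1 h2 => exact h1.union h2
end basic

section definable
open FirstOrder.Language

variable {α : Type}

theorem dfun_add {s t : (α → ℤ) → ℤ} (hs : (Set.univ : Set ℤ).DefinableFun LangOrdGrp s)
    (ht : (Set.univ : Set ℤ).DefinableFun LangOrdGrp t) :
    (Set.univ : Set ℤ).DefinableFun LangOrdGrp (fun x => s x + t x) := by
  have h := (DefinableFun.fun_symbol (M := ℤ) (L := LangOrdGrp)
    (n := 2) (Sum.inl () : LangOrdGrp.Functions 2)).of_empty (A := univ)
  have hg : (Set.univ : Set ℤ).DefinableMap LangOrdGrp (fun v => ![s v, t v]) := by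
    intro i
    fin_cases i
    · exact hs
    · exact ht
  exact DefinableFun.comp hg h

theorem dfun_const (c : ℤ) : (Set.univ : Set ℤ).DefinableFun LangOrdGrp (fun _ : α → ℤ => c) :=
  definableFun_const _ _ (mem_univ _)

theorem dfun_neg {s : (α → ℤ) → ℤ} (hs : (Set.univ : Set ℤ).DefinableFun LangOrdGrp s) :
    (Set.univ : Set ℤ).DefinableFun LangOrdGrp (fun x => - s x) := by
  have h : (Set.univ : Set ℤ).DefinableFun LangOrdGrp (fun v : Fin 1 → ℤ => - v 0) := by
    have := DefinableFun.ofPred_eq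
      (dfun_add (DefinableFun.proj (A := univ) LangOrdGrp (i := none))
      (DefinableFun.proj (A := univ) LangOrdGrp (i := some (0 : Fin 1)))) (dfun_const 0)
    unfold DefinableFun
    convert this using 1
    ext w
    simp only [Function.tupleGraph, mem_ofPred_eq, Function.comp]
    constructor <;> intro h <;> omega
  have hg : (Set.univ : Set ℤ).DefinableMap LangOrdGrp (fun v => ![s v]) := by
    intro i
    fin_cases i
    exact hs
  exact DefinableFun.comp hg h

theorem dfun_smul (c : ℤ) {s : (α → ℤ) → ℤ} (hs : (Set.univ : Set ℤ).DefinableFun LangOrdGrp s) :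
    (Set.univ : Set ℤ).DefinableFun LangOrdGrp (fun x => c * s x) := by
  have key : ∀ n : ℕ, (Set.univ : Set ℤ).DefinableFun LangOrdGrp (fun x => (n : ℤ) * s x) := by
    intro n
    induction n with
    | zero => simpa using dfun_const 0
    | succ n ih => simpa [add_mul] using dfun_add ih hs
  obtain ⟨n, rfl | rfl⟩ := c.eq_nat_or_neg
  · exact key n
  · simpa using dfun_neg (key n)

theorem dfun_sum {ι : Type} (S : Finset ι) {s : ι → (α → ℤ) → ℤ}
    (hs : ∀ i, (Set.univ : Set ℤ).DefinableFun LangOrdGrp (s i)) :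
    (Set.univ : Set ℤ).DefinableFun LangOrdGrp (fun x => ∑ i ∈ S, s i x) := by
  classical
  induction S using Finset.induction_on with
  | empty => simpa using dfun_const 0
  | insert i S hi ih => simpa [Finset.sum_insert hi] using dfun_add (hs i) ih

theorem IsAff.dfun [Fintype α] {t : (α → ℤ) → ℤ} (ht : IsAff t) :
    (Set.univ : Set ℤ).DefinableFun LangOrdGrp t := by
  obtain ⟨u, a, h⟩ := ht
  obtain rfl : t = _ := funext h
  exact dfun_add (dfun_const u) (dfun_sum _ fun i => dfun_smul (a i) (DefinableFun.proj _))

theorem def_le2 : (Set.univ : Set ℤ).Definable LangOrdGrp {v : Fin 2 → ℤ | v 0 ≤ v 1} := by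
  have : (∅ : Set ℤ).Definable LangOrdGrp {v : Fin 2 → ℤ | v 0 ≤ v 1} := by
    rw [empty_definable_iff]
    refine ⟨Relations.formula₂ (L := LangOrdGrp) (Sum.inr leSymb : LangOrdGrp.Relations 2)
      (Term.var 0) (Term.var 1), ?_⟩
    ext v
    simp only [mem_ofPred_eq]
    rfl
  exact this.mono (empty_subset _)

theorem Basic.isDef [Fintype α] {s : Set (α → ℤ)} (hs : Basic s) :
    (Set.univ : Set ℤ).Definable LangOrdGrp s := by
  induction hs with
  | @nonneg t ht =>
    have hg : (Set.univ : Set ℤ).DefinableMap LangOrdGrp (fun v => ![0, t v]) := by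
      intro i
      fin_cases i
      · exact dfun_const 0
      · exact ht.dfun
    exact def_le2.preimage_map hg
  | @dvd t d hd ht =>
    have h1 : IsAff (fun w : α ⊕ Fin 1 → ℤ => d * w (Sum.inr 0)) := (IsAff.coord _).smul d
    have h2 := ht.reindex (Sum.inl : α → α ⊕ Fin 1)
    have := DefinableFun.ofPred_eq h2.dfun h1.dfun
    convert! Definable.exists_of_finite this using 1
    ext v
    simp only [mem_ofPred_eq]
    constructor
    · rintro ⟨z, hz⟩
      exact ⟨fun _ => z, hz⟩
    · rintro ⟨w, hw⟩
      exact ⟨w 0, hw⟩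
  | inter _ _ h1 h2 => exact h1.inter h2
  | union _ _ h1 h2 => exact h1.union h2
end definable

section cells
variable {n : ℕ}

theorem toZBar_le {a b : ℤ} : toZBar a ≤ toZBar b ↔ a ≤ b := by
  simp [toZBar]

theorem not_toZBar_le_bot {a : ℤ} : ¬ toZBar a ≤ ⊥ := by
  simp [toZBar]

theorem not_top_le_toZBar {a : ℤ} : ¬ (⊤ : ZBar) ≤ toZBar a := by
  rw [toZBar, ← WithBot.coe_top, WithBot.coe_le_coe]
  simp

theorem not_top_le_bot : ¬ (⊤ : ZBar) ≤ ⊥ := by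
  simp

/-- `F` is `ℤ`-linear on `X`. -/
def ZLin (X : Set (Fin n → ℤ)) (F : (Fin n → ℤ) → ZBar) : Prop :=
  ∃ dom, IsZLinear dom F ∧ X ⊆ dom

theorem ZLin.mono {X Y : Set (Fin n → ℤ)} {F} (h : ZLin Y F) (hXY : X ⊆ Y) : ZLin X F := by
  obtain ⟨d, h1, h2⟩ := h
  exact ⟨d, h1, hXY.trans h2⟩

theorem ZLin.bot {X : Set (Fin n → ℤ)} : ZLin X (fun _ => ⊥) :=
  ⟨univ, .inl ⟨rfl, fun _ => rfl⟩, subset_univ _⟩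

theorem ZLin.top {X : Set (Fin n → ℤ)} : ZLin X (fun _ => ⊤) :=
  ⟨univ, .inr (.inl ⟨rfl, fun _ => rfl⟩), subset_univ _⟩

theorem std_scaled {dom : Set (Fin n → ℤ)} {f} (h : IsStdZLinear dom f) :
    ∃ N : ℤ, 0 < N ∧ ∃ L, IsAff L ∧ ∀ x ∈ dom, N * f x = L x := by
  obtain ⟨u, a, c, mv, h1, h2, h3⟩ := h
  refine ⟨∏ i, mv i, Finset.prod_pos fun i _ => (h1 i).1,
    fun x => (∏ i, mv i) * u + ∑ i, (a i * ((∏ j, mv j) / mv i)) * (x i - c i), ?_, ?_⟩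
  · exact (IsAff.const _).add (IsAff.sum _ fun i => ((IsAff.coord i).sub (.const _)).smul _)
  · intro x hx
    rw [h3 x hx, mul_add, Finset.mul_sum]
    congr 1
    refine Finset.sum_congr rfl fun i _ => ?_
    rw [h2] at hx
    obtain ⟨z, hz⟩ := hx i
    obtain ⟨w, hw⟩ : mv i ∣ ∏ j, mv j := Finset.dvd_prod_of_mem _ (Finset.mem_univ i)
    have := (h1 i).1.ne'
    rw [hz, hw, Int.mul_ediv_cancel_left _ this, Int.mul_ediv_cancel_left _ this]
    ring

theorem ZLin.cases {X : Set (Fin n → ℤ)} {F} (h : ZLin X F) :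
    (∀ x, F x = ⊥) ∨ (∀ x, F x = ⊤) ∨ ∃ f : (Fin n → ℤ) → ℤ,
      (∃ N : ℤ, 0 < N ∧ ∃ L, IsAff L ∧ ∀ x ∈ X, N * f x = L x) ∧ ∀ x ∈ X, F x = toZBar (f x) := by
  obtain ⟨d, h | h | ⟨f, h1, h2⟩, hX⟩ := h
  · exact .inl h.2
  · exact .inr (.inl h.2)
  · obtain ⟨N, hN, L, hL, h3⟩ := std_scaled h1
    exact .inr (.inr ⟨f, ⟨N, hN, L, hL, fun x hx => h3 x (hX hx)⟩, fun x hx => h2 x (hX hx)⟩)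

theorem basic_le_std {X : Set (Fin n → ℤ)} (hX : Basic X) {f g : (Fin n → ℤ) → ℤ}
    (hf : ∃ N : ℤ, 0 < N ∧ ∃ L, IsAff L ∧ ∀ x ∈ X, N * f x = L x)
    (hg : ∃ N : ℤ, 0 < N ∧ ∃ L, IsAff L ∧ ∀ x ∈ X, N * g x = L x) (j : ℤ) :
    Basic {x | x ∈ X ∧ f x + j ≤ g x} := by
  obtain ⟨N, hN, L, hL, h1⟩ := hf
  obtain ⟨M, hM, K, hK, h2⟩ := hg
  convert hX.inter (Basic.le ((hL.smul M).add (.const (M * N * j))) (hK.smul N)) using 1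
  ext x
  simp only [mem_ofPred_eq, mem_inter_iff]
  refine and_congr_right fun hx => ?_
  rw [← h1 x hx, ← h2 x hx, ← mul_le_mul_iff_right₀ (mul_pos hM hN)]
  ring_nf

theorem basic_dvd_std {X : Set (Fin n → ℤ)} (hX : Basic X) {f : (Fin n → ℤ) → ℤ}
    (hf : ∃ N : ℤ, 0 < N ∧ ∃ L, IsAff L ∧ ∀ x ∈ X, N * f x = L x) (j : ℤ) (m : ℤ) (hm : 0 < m) :
    Basic {x | x ∈ X ∧ m ∣ f x + j} := by
  obtain ⟨N, hN, L, hL, h1⟩ := hf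
  convert hX.inter (Basic.dvd (N * m) (mul_pos hN hm) (hL.add (.const (N * j)))) using 1
  ext x
  simp only [mem_ofPred_eq, mem_inter_iff]
  refine and_congr_right fun hx => ?_
  rw [← h1 x hx, ← mul_add, mul_dvd_mul_iff_left hN.ne']

theorem basic_le {X : Set (Fin n → ℤ)} (hX : Basic X) {F G} (hF : ZLin X F) (hG : ZLin X G) :
    Basic {x | x ∈ X ∧ F x ≤ G x} := by
  have hall : (∀ x ∈ X, F x ≤ G x) → Basic {x | x ∈ X ∧ F x ≤ G x} := by
    intro h
    convert hX using 1
    ext x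
    exact ⟨fun h => h.1, fun hx => ⟨hx, h x hx⟩⟩
  have hnone : (∀ x ∈ X, ¬ F x ≤ G x) → Basic {x | x ∈ X ∧ F x ≤ G x} := by
    intro h
    convert Basic.empty (α := Fin n) using 1
    ext x
    exact ⟨fun hx => h x hx.1 hx.2, fun h => h.elim⟩
  rcases hF.cases with hF | hF | ⟨f, hf, hF⟩
  · exact hall fun x _ => by simp [hF]
  · rcases hG.cases with hG | hG | ⟨g, hg, hG⟩
    · exact hnone fun x _ => by simp [hF, hG]
    · exact hall fun x _ => by simp [hG]
    · exact hnone fun x hx => by rw [hF, hG x hx]; exact not_top_le_toZBar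
  · rcases hG.cases with hG | hG | ⟨g, hg, hG⟩
    · exact hnone fun x hx => by rw [hF x hx, hG]; exact not_toZBar_le_bot
    · exact hall fun x _ => by simp [hG]
    · convert basic_le_std hX hf hg 0 using 1
      ext x
      simp only [mem_ofPred_eq, add_zero]
      refine and_congr_right fun hx => ?_
      rw [hF x hx, hG x hx, toZBar_le]

/-- The cell with given data. -/
def cellSet (X : Set (Fin n → ℤ)) (F G : (Fin n → ℤ) → ZBar) (c m : ℕ) :
    Set (Fin (n + 1) → ℤ) :=
  {p | Fin.init p ∈ X ∧ F (Fin.init p) ≤ toZBar (p (Fin.last n)) ∧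
        toZBar (p (Fin.last n)) ≤ G (Fin.init p) ∧
        (m : ℤ) ∣ (p (Fin.last n) - (c : ℤ))}

def IsCell (s : Set (Fin (n + 1) → ℤ)) : Prop :=
  ∃ X F G c m, Basic X ∧ ZLin X F ∧ ZLin X G ∧ c < m ∧ s = cellSet X F G c m

/-- Finite unions of cells. -/
inductive CU : Set (Fin (n + 1) → ℤ) → Prop
  | cell {s} (hs : IsCell s) : CU s
  | union {s t} (hs : CU s) (ht : CU t) : CU (s ∪ t)

theorem CU.empty : CU (∅ : Set (Fin (n + 1) → ℤ)) :=
  .cell ⟨∅, _, _, 0, 1, .empty, .bot, .bot, one_pos, by ext; simp [cellSet]⟩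

theorem CU.biUnion {ι : Type} (S : Finset ι) {s : ι → Set (Fin (n + 1) → ℤ)}
    (hs : ∀ i ∈ S, CU (s i)) : CU (⋃ i ∈ S, s i) := by
  classical
  induction S using Finset.induction_on with
  | empty => simpa using CU.empty
  | insert i S hi ih =>
    rw [Finset.set_biUnion_insert]
    exact (hs i (Finset.mem_insert_self _ _)).union
      (ih fun j hj => hs j (Finset.mem_insert_of_mem hj))

theorem cell_inter {s t : Set (Fin (n + 1) → ℤ)} (hs : IsCell s) (ht : IsCell t) :
    CU (s ∩ t) := by
  obtain ⟨X, F, G, c, m, hX, hF, hG, hc, rfl⟩ := hs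
  obtain ⟨X', F', G', c', m', hX', hF', hG', hc', rfl⟩ := ht
  by_cases hy : ∃ y : ℤ, (m : ℤ) ∣ y - c ∧ (m' : ℤ) ∣ y - c'
  · obtain ⟨y, hy1, hy2⟩ := hy
    have hm : 0 < m := by omega
    have hm' : 0 < m' := by omega
    have hl : 0 < Nat.lcm m m' := Nat.lcm_pos hm hm'
    set M := Nat.lcm m m'
    have hM : (0 : ℤ) < (M : ℤ) := by exact_mod_cast hl
    obtain ⟨r, hr⟩ := Int.eq_ofNat_of_zero_le (Int.emod_nonneg y hM.ne')
    have hrM : r < M := by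
      have := Int.emod_lt_of_pos y hM
      omega
    have hyr : (M : ℤ) ∣ y - r := by rw [← hr]; exact Int.dvd_self_sub_emod
    have hmod : ∀ z : ℤ, ((m : ℤ) ∣ z - c ∧ (m' : ℤ) ∣ z - c') ↔ (M : ℤ) ∣ z - r := by
      intro z
      rw [show z - c = (z - y) + (y - c) by ring, show z - c' = (z - y) + (y - c') by ring,
        show z - r = (z - y) + (y - r) by ring, dvd_add_left hy1, dvd_add_left hy2,
        dvd_add_left hyr, Int.natCast_dvd, Int.natCast_dvd, Int.natCast_dvd, Nat.lcm_dvd_iff]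
    have hXX := hX.inter hX'
    have hF1 := hF.mono (inter_subset_left (t := X'))
    have hF2 := hF'.mono (inter_subset_right (s := X))
    have hG1 := hG.mono (inter_subset_left (t := X'))
    have hG2 := hG'.mono (inter_subset_right (s := X))
    have key : ∀ (A B C D : (Fin n → ℤ) → ZBar), ZLin (X ∩ X') A → ZLin (X ∩ X') B →
        ZLin (X ∩ X') C → ZLin (X ∩ X') D →
        CU (cellSet ({x | x ∈ X ∩ X' ∧ A x ≤ B x} ∩ {x | x ∈ X ∩ X' ∧ C x ≤ D x}) B C r M) := by
      intro A B C D hA hB hC hD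
      refine .cell ⟨_, _, _, _, _, (basic_le hXX hA hB).inter (basic_le hXX hC hD), ?_, ?_,
        hrM, rfl⟩
      · exact hB.mono fun x hx => hx.1.1
      · exact hC.mono fun x hx => hx.1.1
    have := ((key F F' G G' hF1 hF2 hG1 hG2).union (key F' F G G' hF2 hF1 hG1 hG2)).union
      ((key F F' G' G hF1 hF2 hG2 hG1).union (key F' F G' G hF2 hF1 hG2 hG1))
    convert this using 1
    ext p
    have hp := hmod (p (Fin.last n))
    simp only [cellSet, mem_inter_iff, mem_union, mem_ofPred_eq, ← hp]
    constructor
    · rintro ⟨⟨a1, a2, a3, a4⟩, ⟨b1, b2, b3, b4⟩⟩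
      rcases le_total (F (Fin.init p)) (F' (Fin.init p)) with h1 | h1 <;>
      rcases le_total (G (Fin.init p)) (G' (Fin.init p)) with h2 | h2 <;> simp [*]
    · rintro ((⟨⟨⟨a1, a2⟩, a3, a4⟩, a5, a6, a7⟩ | ⟨⟨⟨a1, a2⟩, a3, a4⟩, a5, a6, a7⟩) |
        (⟨⟨⟨a1, a2⟩, a3, a4⟩, a5, a6, a7⟩ | ⟨⟨⟨a1, a2⟩, a3, a4⟩, a5, a6, a7⟩))
      · exact ⟨⟨a1.1, a2.trans a5, a6, a7.1⟩, a1.2, a5, a6.trans a4, a7.2⟩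
      · exact ⟨⟨a1.1, a5, a6, a7.1⟩, a1.2, a2.trans a5, a6.trans a4, a7.2⟩
      · exact ⟨⟨a1.1, a2.trans a5, a6.trans a4, a7.1⟩, a1.2, a5, a6, a7.2⟩
      · exact ⟨⟨a1.1, a5, a6.trans a4, a7.1⟩, a1.2, a2.trans a5, a6, a7.2⟩
  · convert CU.empty using 1
    ext p
    simp only [cellSet, mem_inter_iff, mem_ofPred_eq, mem_empty_iff_false, iff_false]
    rintro ⟨⟨_, _, _, h1⟩, ⟨_, _, _, h2⟩⟩
    exact hy ⟨_, h1, h2⟩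

theorem CU.inter {s t : Set (Fin (n + 1) → ℤ)} (hs : CU s) (ht : CU t) : CU (s ∩ t) := by
  induction hs with
  | cell hs =>
    induction ht with
    | cell ht => exact cell_inter hs ht
    | union _ _ h1 h2 => rw [inter_union_distrib_left]; exact h1.union h2
  | union _ _ h1 h2 => rw [union_inter_distrib_right]; exact h1.union h2

theorem CU.proj {s : Set (Fin (n + 1) → ℤ)} (hs : CU s) :
    Basic {x : Fin n → ℤ | ∃ y : ℤ, (Fin.snoc x y : Fin (n + 1) → ℤ) ∈ s} := by
  induction hs with
  | union _ _ h1 h2 =>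
    convert h1.union h2 using 1
    ext x
    simp [exists_or]
  | cell hs =>
    obtain ⟨X, F, G, c, m, hX, hF, hG, hc, rfl⟩ := hs
    simp only [cellSet, mem_ofPred_eq, Fin.init_snoc, Fin.snoc_last]
    have hm : (0 : ℤ) < m := by exact_mod_cast (by omega : 0 < m)
    have hall : (∀ x ∈ X, ∃ y : ℤ, F x ≤ toZBar y ∧ toZBar y ≤ G x ∧ (m : ℤ) ∣ y - c) →
        Basic {x | ∃ y : ℤ, x ∈ X ∧ F x ≤ toZBar y ∧ toZBar y ≤ G x ∧ (m : ℤ) ∣ y - c} := by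
      intro h
      convert hX using 1
      ext x
      exact ⟨fun h => h.choose_spec.1, fun hx => (h x hx).imp fun y hy => ⟨hx, hy⟩⟩
    have hnone : (∀ x ∈ X, ¬ ∃ y : ℤ, F x ≤ toZBar y ∧ toZBar y ≤ G x ∧ (m : ℤ) ∣ y - c) →
        Basic {x | ∃ y : ℤ, x ∈ X ∧ F x ≤ toZBar y ∧ toZBar y ≤ G x ∧ (m : ℤ) ∣ y - c} := by
      intro h
      convert Basic.empty (α := Fin n) using 1
      ext x
      exact ⟨fun ⟨y, hx, hy⟩ => h x hx ⟨y, hy⟩, fun h => h.elim⟩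
    rcases hF.cases with hF | hF | ⟨f, hf, hF⟩
    · rcases hG.cases with hG | hG | ⟨g, hg, hG⟩
      · exact hnone fun x _ ⟨y, hy⟩ => not_toZBar_le_bot (hG x ▸ hy.2.1)
      · exact hall fun x _ => ⟨c, by simp [hF, hG]⟩
      · refine hall fun x hx => ⟨g x - (g x - c) % m, by simp [hF], ?_, ?_⟩
        · rw [hG x hx, toZBar_le]
          have := Int.emod_nonneg (g x - c) hm.ne'
          omega
        · have := Int.dvd_self_sub_emod (x := g x - c) (m := m)
          convert this using 1
          ring
    · exact hnone fun x _ ⟨y, hy⟩ => not_top_le_toZBar (hF x ▸ hy.1)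
    · rcases hG.cases with hG | hG | ⟨g, hg, hG⟩
      · exact hnone fun x _ ⟨y, hy⟩ => not_toZBar_le_bot (hG x ▸ hy.2.1)
      · refine hall fun x hx => ⟨f x + (c - f x) % m, ?_, by simp [hG], ?_⟩
        · rw [hF x hx, toZBar_le]
          have := Int.emod_nonneg (c - f x) hm.ne'
          omega
        · obtain ⟨q, hq⟩ := Int.dvd_self_sub_emod (x := c - f x) (m := m)
          exact ⟨-q, by linear_combination -hq⟩
      · convert Basic.biUnion (Finset.Ico (0 : ℤ) m) (fun j => (basic_le_std hX hf hg j).inter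
          (basic_dvd_std hX hf (j - c) m hm)) using 1
        ext x
        simp only [mem_ofPred_eq, mem_iUnion, mem_inter_iff, Finset.mem_Ico, exists_prop]
        constructor
        · rintro ⟨y, hx, h1, h2, h3⟩
          rw [hF x hx, toZBar_le] at h1
          rw [hG x hx, toZBar_le] at h2
          refine ⟨(y - f x) % m, ⟨Int.emod_nonneg _ hm.ne', Int.emod_lt_of_pos _ hm⟩,
            ⟨hx, ?_⟩, hx, ?_⟩
          · have h4 : 0 ≤ (m : ℤ) * ((y - f x) / m) :=
              mul_nonneg hm.le (Int.ediv_nonneg (by omega) hm.le)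
            have h5 := Int.emod_add_mul_ediv (y - f x) m
            linarith
          · obtain ⟨q, hq⟩ := Int.dvd_self_sub_emod (x := y - f x) (m := m)
            obtain ⟨q', hq'⟩ := h3
            exact ⟨q' - q, by linear_combination hq' - hq⟩
        · rintro ⟨j, ⟨h0, h1⟩, ⟨hx, h2⟩, _, h3⟩
          refine ⟨f x + j, hx, ?_, ?_, ?_⟩
          · rw [hF x hx, toZBar_le]; omega
          · rwa [hG x hx, toZBar_le]
          · convert h3 using 1; ring
end cells

section atoms
variable {n : ℕ}

theorem cell_aff {t : (Fin (n + 1) → ℤ) → ℤ} (ht : IsAff t) :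
    ∃ (u b : ℤ) (a : Fin n → ℤ), ∀ p : Fin (n + 1) → ℤ,
      t p = (u + ∑ i, a i * (Fin.init p : Fin n → ℤ) i) + b * p (Fin.last n) := by
  obtain ⟨u, a, h⟩ := ht
  refine ⟨u, a (Fin.last n), fun i => a i.castSucc, fun p => ?_⟩
  rw [h, Fin.sum_univ_castSucc, add_assoc]
  rfl

theorem isAff_form (u : ℤ) (a : Fin n → ℤ) : IsAff (fun x : Fin n → ℤ => u + ∑ i, a i * x i) :=
  ⟨u, a, fun _ => rfl⟩

theorem CU.dvd {t : (Fin (n + 1) → ℤ) → ℤ} (ht : IsAff t) (d : ℤ) (hd : 0 < d) :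
    CU {p | d ∣ t p} := by
  obtain ⟨u, b, a, h⟩ := cell_aff ht
  lift d to ℕ using hd.le
  convert CU.biUnion (Finset.range d) (s := fun c =>
    cellSet {x : Fin n → ℤ | (d : ℤ) ∣ (u + ∑ i, a i * x i) + b * c}
      (fun _ => ⊥) (fun _ => ⊤) c d) ?_ using 1
  · ext p
    simp only [cellSet, mem_ofPred_eq, mem_iUnion, Finset.mem_range, exists_prop, h]
    constructor
    · rintro ⟨z, hz⟩
      obtain ⟨r, hr⟩ := Int.eq_ofNat_of_zero_le (Int.emod_nonneg (p (Fin.last n)) hd.ne')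
      obtain ⟨q, hq⟩ := Int.dvd_self_sub_emod (x := p (Fin.last n)) (m := d)
      rw [hr] at hq
      refine ⟨r, ?_, ⟨z - b * q, by linear_combination hz - b * hq⟩, bot_le, le_top, q, hq⟩
      have := Int.emod_lt_of_pos (p (Fin.last n)) hd
      omega
    · rintro ⟨c, hc, ⟨z, hz⟩, _, _, ⟨q, hq⟩⟩
      exact ⟨z + b * q, by linear_combination hz + b * hq⟩
  · intro c hc
    exact .cell ⟨_, _, _, _, _, .dvd _ hd ((isAff_form u a).add (.const _)), .bot, .top,
      Finset.mem_range.1 hc, rfl⟩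

/-- Residue class of `c` modulo `b`. -/
def resSet (b : ℤ) (c : Fin n → ℤ) : Set (Fin n → ℤ) := {x | ∀ i, b ∣ x i - c i}

theorem basic_resSet (b : ℤ) (hb : 0 < b) (c : Fin n → ℤ) : Basic (resSet b c) := by
  have : ∀ S : Finset (Fin n), Basic {x : Fin n → ℤ | ∀ i ∈ S, b ∣ x i - c i} := by
    intro S
    induction S using Finset.induction_on with
    | empty => simpa using Basic.univ
    | insert i S hi ih =>
      convert (Basic.dvd b hb ((IsAff.coord i).sub (.const (c i)))).inter ih using 1
      ext x
      simp
  simpa using! this Finset.univ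

theorem zlin_res (b : ℤ) (hb : 0 < b) (c : Fin n → ℤ) (hc : ∀ i, 0 ≤ c i ∧ c i < b)
    (v : ℤ) (a : Fin n → ℤ) :
    ZLin (resSet b c) (fun x => toZBar (v + ∑ i, a i * ((x i - c i) / b))) :=
  ⟨resSet b c, .inr (.inr ⟨_, ⟨v, a, c, fun _ => b, fun i => ⟨hb, hc i⟩, rfl, fun _ _ => rfl⟩,
    fun _ _ => rfl⟩), subset_rfl⟩

theorem form_res (b : ℤ) (hb : 0 < b) (c x : Fin n → ℤ) (hx : x ∈ resSet b c) (u : ℤ)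
    (a : Fin n → ℤ) :
    u + ∑ i, a i * x i = (u + ∑ i, a i * c i) + b * ∑ i, a i * ((x i - c i) / b) := by
  rw [Finset.mul_sum, add_assoc, ← Finset.sum_add_distrib]
  congr 1
  refine Finset.sum_congr rfl fun i _ => ?_
  obtain ⟨z, hz⟩ := hx i
  rw [hz, Int.mul_ediv_cancel_left _ hb.ne']
  linear_combination a i * hz

theorem mem_res_iff (b : ℤ) (hb : 0 < b) (x : Fin n → ℤ) :
    ∃ c ∈ Fintype.piFinset (fun _ : Fin n => Finset.Ico 0 b), x ∈ resSet b c := by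
  refine ⟨fun i => x i % b, ?_, fun i => Int.dvd_self_sub_emod⟩
  rw [Fintype.mem_piFinset]
  intro i
  rw [Finset.mem_Ico]
  exact ⟨Int.emod_nonneg _ hb.ne', Int.emod_lt_of_pos _ hb⟩

theorem CU.nonneg {t : (Fin (n + 1) → ℤ) → ℤ} (ht : IsAff t) : CU {p | 0 ≤ t p} := by
  obtain ⟨u, b, a, h⟩ := cell_aff ht
  rcases lt_trichotomy b 0 with hb | rfl | hb
  · obtain ⟨e, rfl⟩ : ∃ e, b = -e := ⟨-b, by ring⟩
    have he : 0 < e := by omega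
    convert CU.biUnion (Fintype.piFinset (fun _ : Fin n => Finset.Ico 0 e)) (s := fun c =>
      cellSet (resSet e c) (fun _ => ⊥)
        (fun x => toZBar ((u + ∑ i, a i * c i) / e + ∑ i, a i * ((x i - c i) / e))) 0 1) ?_ using 1
    · ext p
      simp only [mem_iUnion, exists_prop, mem_ofPred_eq, h, cellSet]
      have key : ∀ c, Fin.init p ∈ resSet e c →
          (0 ≤ (u + ∑ i, a i * (Fin.init p : Fin n → ℤ) i) + -e * p (Fin.last n) ↔
            p (Fin.last n) ≤ (u + ∑ i, a i * c i) / e +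
              ∑ i, a i * (((Fin.init p : Fin n → ℤ) i - c i) / e)) := by
        intro c hc
        have e1 : ∀ q s w : ℤ, w ≤ q + s ↔ w - s ≤ q := by
          intros; constructor <;> intro <;> linarith
        rw [form_res e he c _ hc, e1 (_ / e), Int.le_ediv_iff_mul_le he]
        constructor <;> intro h <;> linarith
      constructor
      · intro hp
        obtain ⟨c, hc, hx⟩ := mem_res_iff e he (Fin.init p)
        exact ⟨c, hc, hx, bot_le, toZBar_le.2 ((key c hx).1 hp), by simp⟩
      · rintro ⟨c, hc, hx, _, h2, _⟩
        exact (key c hx).2 (toZBar_le.1 h2)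
    · intro c hc
      rw [Fintype.mem_piFinset] at hc
      exact .cell ⟨_, _, _, _, _, basic_resSet e he c, .bot,
        zlin_res e he c (fun i => Finset.mem_Ico.1 (hc i)) _ a, one_pos, rfl⟩
  · refine .cell ⟨_, _, _, 0, 1, .nonneg (isAff_form u a), .bot, .top, one_pos, ?_⟩
    ext p
    simp [cellSet, h]
  · convert CU.biUnion (Fintype.piFinset (fun _ : Fin n => Finset.Ico 0 b)) (s := fun c =>
      cellSet (resSet b c) 
        (fun x => toZBar (-((u + ∑ i, a i * c i) / b) + ∑ i, (-a i) * ((x i - c i) / b)))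
        (fun _ => ⊤) 0 1) ?_ using 1
    · ext p
      simp only [mem_iUnion, exists_prop, mem_ofPred_eq, h, cellSet]
      have key : ∀ c, Fin.init p ∈ resSet b c →
          (0 ≤ (u + ∑ i, a i * (Fin.init p : Fin n → ℤ) i) + b * p (Fin.last n) ↔
            -((u + ∑ i, a i * c i) / b) +
              ∑ i, (-a i) * (((Fin.init p : Fin n → ℤ) i - c i) / b) ≤ p (Fin.last n)) := by
        intro c hc
        have e1 : ∀ q s w : ℤ, -q + -s ≤ w ↔ -s - w ≤ q := by
          intros; constructor <;> intro <;> linarith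
        simp only [neg_mul, Finset.sum_neg_distrib]
        rw [form_res b hb c _ hc, e1, Int.le_ediv_iff_mul_le hb]
        constructor <;> intro h <;> linarith
      constructor
      · intro hp
        obtain ⟨c, hc, hx⟩ := mem_res_iff b hb (Fin.init p)
        exact ⟨c, hc, hx, toZBar_le.2 ((key c hx).1 hp), le_top, by simp⟩
      · rintro ⟨c, hc, hx, h2, _, _⟩
        exact (key c hx).2 (toZBar_le.1 h2)
    · intro c hc
      rw [Fintype.mem_piFinset] at hc
      exact .cell ⟨_, _, _, _, _, basic_resSet b hb c, 
        zlin_res b hb c (fun i => Finset.mem_Ico.1 (hc i)) _ (fun i => -a i), .top, one_pos, rfl⟩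

theorem Basic.cu {s : Set (Fin (n + 1) → ℤ)} (hs : Basic s) : CU s := by
  induction hs with
  | nonneg ht => exact CU.nonneg ht
  | dvd d hd ht => exact CU.dvd ht d hd
  | inter _ _ h1 h2 => exact h1.inter h2
  | union _ _ h1 h2 => exact h1.union h2

theorem CU.family {s : Set (Fin (n + 1) → ℤ)} (hs : CU s) :
    ∃ (k : ℕ) (S : Fin k → Set (Fin (n + 1) → ℤ)), (∀ t, IsCell (S t)) ∧ s = ⋃ t, S t := by
  induction hs with
  | @cell s hs => exact ⟨1, fun _ => s, fun _ => hs, (iUnion_const s).symm⟩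
  | union _ _ h1 h2 =>
    obtain ⟨k, S, hS, rfl⟩ := h1
    obtain ⟨l, T, hT, rfl⟩ := h2
    refine ⟨k + l, Fin.append S T, fun t => ?_, ?_⟩
    · refine Fin.addCases (fun i => ?_) (fun i => ?_) t
      · rw [Fin.append_left]; exact hS i
      · rw [Fin.append_right]; exact hT i
    · ext p
      simp only [mem_union, mem_iUnion]
      constructor
      · rintro (⟨i, hi⟩ | ⟨i, hi⟩)
        · exact ⟨Fin.castAdd l i, by rwa [Fin.append_left]⟩
        · exact ⟨Fin.natAdd k i, by rwa [Fin.append_right]⟩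
      · rintro ⟨t, ht⟩
        induction t using Fin.addCases with
        | left i => rw [Fin.append_left] at ht; exact .inl ⟨i, ht⟩
        | right i => rw [Fin.append_right] at ht; exact .inr ⟨i, ht⟩
end atoms

section qe
open FirstOrder.Language

theorem term_aff {α : Type} [Fintype α] (t : (LangOrdGrp[[(Set.univ : Set ℤ)]]).Term α) :
    IsAff (fun v : α → ℤ => t.realize v) := by
  induction t with
  | var i => exact IsAff.coord i
  | @func l f ts ih =>
    cases f with
    | inl f =>
      cases f with
      | inl f =>
        match l, f with
        | 0, f => exact IsAff.const 0
        | 2, f => exact (ih 0).add (ih 1)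
      | inr f => nomatch f
    | inr f =>
      cases l with
      | zero => exact IsAff.const f.1
      | succ => nomatch f

theorem bounded_basic {α : Type} [Fintype α] {n : ℕ}
    (φ : (LangOrdGrp[[(Set.univ : Set ℤ)]]).BoundedFormula α n) :
    Basic {v : α ⊕ Fin n → ℤ | φ.Realize (v ∘ Sum.inl) (v ∘ Sum.inr)} := by
  induction φ with
  | falsum => exact Basic.empty
  | equal t₁ t₂ =>
    convert Basic.eq (term_aff t₁) (term_aff t₂) using 1
    ext v
    simp [BoundedFormula.Realize, Sum.elim_comp_inl_inr]
  | @rel n l R ts =>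
    cases R with
    | inl R =>
      cases R with
      | inl R => nomatch R
      | inr R =>
        cases R
        convert Basic.le (term_aff (ts 0)) (term_aff (ts 1)) using 1
        ext v
        simp only [BoundedFormula.Realize, Sum.elim_comp_inl_inr]
        rfl
    | inr R => nomatch R
  | imp _ _ ih₁ ih₂ =>
    convert ih₁.compl.union ih₂ using 1
    ext v
    simp [BoundedFormula.Realize, imp_iff_not_or]
  | @all n φ ih =>
    let e := Fintype.equivFin (α ⊕ Fin n)
    let f : α ⊕ Fin (n + 1) → Fin (Fintype.card (α ⊕ Fin n) + 1) :=
      Sum.elim (fun a => (e (Sum.inl a)).castSucc)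
        (Fin.snoc (α := fun _ => Fin (Fintype.card (α ⊕ Fin n) + 1))
          (fun i => (e (Sum.inr i)).castSucc) (Fin.last _))
    convert (((ih.compl.reindex f).cu.proj).reindex e.symm).compl using 1
    ext v
    simp only [BoundedFormula.Realize, mem_ofPred_eq, mem_compl_iff, not_exists, not_not]
    refine forall_congr' fun y => ?_
    have h1 : (((Fin.snoc (v ∘ e.symm) y : Fin (_ + 1) → ℤ) ∘ f) ∘ Sum.inl) = v ∘ Sum.inl := by
      funext a
      simp [f]
    have h2 : (((Fin.snoc (v ∘ e.symm) y : Fin (_ + 1) → ℤ) ∘ f) ∘ Sum.inr)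
        = Fin.snoc (v ∘ Sum.inr) y := by
      funext i
      cases i using Fin.lastCases <;> simp [f]
    rw [h1, h2]

theorem IsPresburger.basic {n : ℕ} {A : Set (Fin n → ℤ)} (hA : IsPresburger A) : Basic A := by
  obtain ⟨φ, rfl⟩ := hA
  convert (bounded_basic φ).reindex (Sum.elim id Fin.elim0 : Fin n ⊕ Fin 0 → Fin n) using 1
  ext v
  simp only [mem_ofPred_eq, Formula.Realize]
  have : (v ∘ Sum.elim id Fin.elim0) ∘ Sum.inl = v := rfl
  rw [this]
  exact iff_of_eq (congrArg _ (Subsingleton.elim _ _))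
end qe

/-- Cluckers' cell decomposition, corollary form: every Presburger subset of
`ℤⁿ⁺¹` is a finite union of sets `{(x̄,y) : x̄ ∈ Xₜ, fₜ(x̄) ≤ y ≤ gₜ(x̄), y ≡ cₜ (mod mₜ)}`. -/
theorem stmt17 {n : ℕ} (A : Set (Fin (n + 1) → ℤ)) (hA : IsPresburger A) :
    ∃ (k : ℕ) (X : Fin k → Set (Fin n → ℤ)) (df dg : Fin k → Set (Fin n → ℤ))
      (F G : Fin k → ((Fin n → ℤ) → ZBar)) (c m : Fin k → ℕ),
      (∀ t, IsPresburger (X t) ∧ IsZLinear (df t) (F t) ∧ IsZLinear (dg t) (G t) ∧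
        X t ⊆ df t ∧ X t ⊆ dg t ∧ c t < m t) ∧
      A = ⋃ t, {p : Fin (n + 1) → ℤ | Fin.init p ∈ X t ∧
        F t (Fin.init p) ≤ toZBar (p (Fin.last n)) ∧
        toZBar (p (Fin.last n)) ≤ G t (Fin.init p) ∧
        (m t : ℤ) ∣ (p (Fin.last n) - (c t : ℤ))} := by
  obtain ⟨k, S, hS, rfl⟩ := hA.basic.cu.family
  choose X F G c m hX hF hG hc hs using hS
  choose df hdf hXf using hF
  choose dg hdg hXg using hG
  refine ⟨k, X, df, dg, F, G, c, m, fun t => ⟨(hX t).isDef, hdf t, hdg t, hXf t, hXg t, hc t⟩, ?_⟩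
  exact iUnion_congr hs
end

section
/- For any n ≥ 1: if A ⊆ Z^n is definable in (Z,+,<,0), then either A is definable in (Z,+,0), or ℕ is definable in the structure (Z,+,0,A). Equivalently, any structure on Z expanding (Z,+,0) and reduct of (Z,+,<,0) is interdefinable with (Z,+,0) or with (Z,+,<,0). -/
open FirstOrder

/-! Affine functions and closure properties of definability -/

namespace NoInter

open FirstOrder FirstOrder.Language Set

/-- Integral affine functions. -/
inductive Aff {κ : Type} : ((κ → ℤ) → ℤ) → Prop
  | const (c : ℤ) : Aff (fun _ => c)
  | var (i : κ) : Aff (fun v => v i)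
  | add {f g : (κ → ℤ) → ℤ} : Aff f → Aff g → Aff (fun v => f v + g v)
  | smul (k : ℤ) {f : (κ → ℤ) → ℤ} : Aff f → Aff (fun v => k * f v)

theorem Aff.neg {κ : Type} {f : (κ → ℤ) → ℤ} (hf : Aff f) : Aff (fun v => - f v) := by
  simpa using Aff.smul (-1) hf

theorem Aff.sub {κ : Type} {f g : (κ → ℤ) → ℤ} (hf : Aff f) (hg : Aff g) :
    Aff (fun v => f v - g v) := by
  simpa [sub_eq_add_neg] using hf.add hg.neg

theorem Aff.comp {κ κ' : Type} {f : (κ → ℤ) → ℤ} (hf : Aff f) {g : (κ' → ℤ) → κ → ℤ}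
    (hg : ∀ i, Aff (fun v => g v i)) : Aff (fun v => f (g v)) := by
  induction hf with
  | const c => exact .const c
  | var i => exact hg i
  | add _ _ h1 h2 => exact h1.add h2
  | smul k _ h => exact h.smul k

theorem Aff.congr_mod {κ : Type} {f : (κ → ℤ) → ℤ} (hf : Aff f) (N : ℤ) {x x' : κ → ℤ}
    (h : ∀ i, N ∣ x i - x' i) : N ∣ f x - f x' := by
  induction hf with
  | const c => simp
  | var i => exact h i
  | @add f g _ _ h1 h2 =>
    have := dvd_add h1 h2
    have e : f x + g x - (f x' + g x') = f x - f x' + (g x - g x') := by ring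
    rwa [e]
  | @smul k f _ h1 =>
    have := h1.mul_left k
    rwa [mul_sub] at this

/-- Extension of a tuple by one more coordinate. -/
def ext {κ : Type} (x : κ → ℤ) (y : ℤ) : Option κ → ℤ := fun o => o.elim y x

@[simp] theorem ext_none {κ : Type} (x : κ → ℤ) (y : ℤ) : ext x y none = y := rfl
@[simp] theorem ext_some {κ : Type} (x : κ → ℤ) (y : ℤ) (i : κ) : ext x y (some i) = x i := rfl

theorem ext_eta {κ : Type} (w : Option κ → ℤ) : ext (fun i => w (some i)) (w none) = w := by
  funext o; cases o <;> rfl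

theorem Aff.ext {κ κ' : Type} {g : (κ' → ℤ) → κ → ℤ} (hg : ∀ i, Aff (fun v => g v i))
    {f : (κ' → ℤ) → ℤ} (hf : Aff f) (i : Option κ) : Aff (fun v => ext (g v) (f v) i) := by
  cases i with
  | none => exact hf
  | some i => exact hg i

/-- An affine function in one more variable splits. -/
theorem Aff.split {κ : Type} {f : (Option κ → ℤ) → ℤ} (hf : Aff f) :
    ∃ (b : ℤ) (u : (κ → ℤ) → ℤ), Aff u ∧ ∀ x y, f (NoInter.ext x y) = b * y + u x := by
  induction hf with
  | const c => exact ⟨0, _, .const c, by simp⟩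
  | var i =>
    cases i with
    | none => exact ⟨1, _, .const 0, by simp⟩
    | some i => exact ⟨0, _, .var i, by simp⟩
  | add _ _ h1 h2 =>
    obtain ⟨b1, u1, a1, e1⟩ := h1
    obtain ⟨b2, u2, a2, e2⟩ := h2
    exact ⟨b1 + b2, _, a1.add a2, fun x y => by beta_reduce; rw [e1, e2]; ring⟩
  | smul k _ h =>
    obtain ⟨b1, u1, a1, e1⟩ := h
    exact ⟨k * b1, _, a1.smul k, fun x y => by beta_reduce; rw [e1]; ring⟩

section Def

variable (L : FirstOrder.Language.{0, 0}) [L.Structure ℤ]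

/-- Definable predicates (with parameters). -/
def Dp {κ : Type} (P : (κ → ℤ) → Prop) : Prop :=
  Set.Definable (Set.univ : Set ℤ) L {v | P v}

/-- Addition is definable. -/
def AddDef : Prop :=
  Set.DefinableFun L (Set.univ : Set ℤ) (fun v : Fin 2 → ℤ => v 0 + v 1)

variable {L}

theorem Dp.and {κ : Type} {P Q : (κ → ℤ) → Prop} (hP : Dp L P) (hQ : Dp L Q) :
    Dp L (fun v => P v ∧ Q v) := Set.Definable.inter hP hQ

theorem Dp.or {κ : Type} {P Q : (κ → ℤ) → Prop} (hP : Dp L P) (hQ : Dp L Q) :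
    Dp L (fun v => P v ∨ Q v) := Set.Definable.union hP hQ

theorem Dp.not {κ : Type} {P : (κ → ℤ) → Prop} (hP : Dp L P) :
    Dp L (fun v => ¬ P v) := Set.Definable.compl hP

theorem Dp.congr {κ : Type} {P Q : (κ → ℤ) → Prop} (hP : Dp L P) (h : ∀ v, P v ↔ Q v) :
    Dp L Q := by
  have : P = Q := by funext v; exact propext (h v)
  rwa [← this]

theorem Dp.reindex {κ κ' : Type} {P : (κ → ℤ) → Prop} (hP : Dp L P) (σ : κ → κ') :
    Dp L (fun v : κ' → ℤ => P (fun i => v (σ i))) := Set.Definable.preimage_comp σ hP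

theorem Dp.imp {κ : Type} {P Q : (κ → ℤ) → Prop} (hP : Dp L P) (hQ : Dp L Q) :
    Dp L (fun v => P v → Q v) :=
  (hP.not.or hQ).congr fun v => by tauto

theorem Dp.prop {κ : Type} (p : Prop) : Dp L (fun _ : κ → ℤ => p) := by
  by_cases h : p
  · simp [Dp, h]
  · simp [Dp, h]

theorem Dp.finEx {κ ι : Type} [Finite ι] {P : ι → (κ → ℤ) → Prop} (h : ∀ i, Dp L (P i)) :
    Dp L (fun v => ∃ i, P i v) := by
  have := Set.definable_iUnion_of_finite h
  unfold Dp
  convert! this using 1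
  ext v; simp

theorem Dp.finAll {κ ι : Type} [Finite ι] {P : ι → (κ → ℤ) → Prop} (h : ∀ i, Dp L (P i)) :
    Dp L (fun v => ∀ i, P i v) :=
  (Dp.finEx fun i => (h i).not).not.congr fun v => by simp

theorem Dp.exs {κ ι : Type} [Finite ι] {P : (κ → ℤ) → (ι → ℤ) → Prop}
    (h : Dp L (fun w : κ ⊕ ι → ℤ => P (fun i => w (.inl i)) (fun i => w (.inr i)))) :
    Dp L (fun v => ∃ u, P v u) :=
  Set.Definable.exists_of_finite h

theorem Dp.ex {κ : Type} {P : (κ → ℤ) → ℤ → Prop}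
    (h : Dp L (fun w : κ ⊕ Unit → ℤ => P (fun i => w (.inl i)) (w (.inr ())))) :
    Dp L (fun v => ∃ y, P v y) :=
  (Dp.exs (ι := Unit) (P := fun v u => P v (u ())) h).congr fun v =>
    ⟨fun ⟨u, hu⟩ => ⟨u (), hu⟩, fun ⟨y, hy⟩ => ⟨fun _ => y, hy⟩⟩

theorem Dp.all {κ : Type} {P : (κ → ℤ) → ℤ → Prop}
    (h : Dp L (fun w : κ ⊕ Unit → ℤ => P (fun i => w (.inl i)) (w (.inr ())))) :
    Dp L (fun v => ∀ y, P v y) :=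
  (Dp.ex (P := fun v y => ¬ P v y) h.not).not.congr fun v => by simp

theorem AddDef.add (hL : AddDef L) {κ : Type} {f g : (κ → ℤ) → ℤ}
    (hf : Set.DefinableFun L Set.univ f) (hg : Set.DefinableFun L Set.univ g) :
    Set.DefinableFun L Set.univ (fun v => f v + g v) := by
  have hm : Set.DefinableMap L Set.univ (fun v => ![f v, g v]) := by
    intro i
    fin_cases i
    · exact hf
    · exact hg
  exact Set.DefinableFun.comp hm hL

theorem AddDef.neg (hL : AddDef L) {κ : Type} {f : (κ → ℤ) → ℤ}
    (hf : Set.DefinableFun L Set.univ f) :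
    Set.DefinableFun L Set.univ (fun v => - f v) := by
  have hneg : Set.DefinableFun L Set.univ (fun v : Unit → ℤ => - v ()) := by
    have h1 : Set.DefinableFun L (Set.univ : Set ℤ)
        (fun v : Option Unit → ℤ => v (some ()) + v none) :=
      hL.add (Set.DefinableFun.proj L) (Set.DefinableFun.proj L)
    have h2 := h1.ofPred_eq_const (a := 0) (Set.mem_univ _)
    unfold Set.DefinableFun
    convert! h2 using 1
    ext v
    simp only [Function.tupleGraph, Set.mem_ofPred_eq, Function.comp]
    omega
  exact Set.DefinableFun.comp (g := fun v _ => f v) (fun _ => hf) hneg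

theorem Aff.defFun (hL : AddDef L) {κ : Type} {f : (κ → ℤ) → ℤ} (hf : Aff f) :
    Set.DefinableFun L Set.univ f := by
  induction hf with
  | const c => exact L.definableFun_const _ (Set.mem_univ c)
  | var i => exact Set.DefinableFun.proj L
  | add _ _ h1 h2 => exact hL.add h1 h2
  | @smul k f _ h =>
    induction k using Int.induction_on with
    | zero => simpa using L.definableFun_const _ (Set.mem_univ (0 : ℤ))
    | succ i ih =>
      have := hL.add ih h
      simpa [add_mul] using this
    | pred i ih =>
      have := hL.add ih (hL.neg h)
      simpa [add_mul, sub_eq_add_neg] using this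

theorem Dp.sub (hL : AddDef L) {κ κ' : Type} [Finite κ] {P : (κ → ℤ) → Prop} (hP : Dp L P)
    {g : (κ' → ℤ) → κ → ℤ} (hg : ∀ i, Aff (fun v => g v i)) : Dp L (fun v => P (g v)) :=
  Set.Definable.preimage_map (F := g) (fun i => (hg i).defFun hL) hP

theorem Dp.eq (hL : AddDef L) {κ : Type} {f g : (κ → ℤ) → ℤ} (hf : Aff f) (hg : Aff g) :
    Dp L (fun v => f v = g v) :=
  (hf.defFun hL).ofPred_eq (hg.defFun hL)

end Def

end NoInter

/-! Quantifier elimination for Presburger arithmetic (semantic form) -/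

namespace NoInter

open FirstOrder FirstOrder.Language Set

/-- Membership only depends on residues modulo `N` and signs of finitely many affine functions. -/
def QE {κ : Type} (P : (κ → ℤ) → Prop) : Prop :=
  ∃ (N : ℤ) (S : Set ((κ → ℤ) → ℤ)), 0 < N ∧ S.Finite ∧ (∀ f ∈ S, Aff f) ∧
    ∀ x x', (∀ i, N ∣ x i - x' i) → (∀ f ∈ S, 0 ≤ f x ↔ 0 ≤ f x') → P x → P x'

theorem QE.congr {κ : Type} {P Q : (κ → ℤ) → Prop} (hP : QE P) (h : ∀ v, P v ↔ Q v) : QE Q := by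
  have : P = Q := by funext v; exact propext (h v)
  rwa [← this]

theorem QE.not {κ : Type} {P : (κ → ℤ) → Prop} (hP : QE P) : QE (fun v => ¬ P v) := by
  obtain ⟨N, S, hN, hS, hA, h⟩ := hP
  refine ⟨N, S, hN, hS, hA, fun x x' h1 h2 h3 h4 => h3 (h x' x (fun i => ?_) ?_ h4)⟩
  · rw [← dvd_neg, neg_sub]; exact h1 i
  · exact fun f hf => (h2 f hf).symm

theorem QE.and {κ : Type} {P Q : (κ → ℤ) → Prop} (hP : QE P) (hQ : QE Q) :
    QE (fun v => P v ∧ Q v) := by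
  obtain ⟨N, S, hN, hS, hA, h⟩ := hP
  obtain ⟨N', S', hN', hS', hA', h'⟩ := hQ
  refine ⟨N * N', S ∪ S', mul_pos hN hN', hS.union hS', ?_, ?_⟩
  · rintro f (hf | hf)
    exacts [hA f hf, hA' f hf]
  · rintro x x' h1 h2 ⟨h3, h4⟩
    exact ⟨h x x' (fun i => (dvd_mul_right N N').trans (h1 i)) (fun f hf => h2 f (.inl hf)) h3,
      h' x x' (fun i => (dvd_mul_left N' N).trans (h1 i)) (fun f hf => h2 f (.inr hf)) h4⟩

theorem QE.false {κ : Type} : QE (fun _ : κ → ℤ => False) :=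
  ⟨1, ∅, one_pos, Set.finite_empty, by simp, by simp⟩

theorem QE.nonneg {κ : Type} {f : (κ → ℤ) → ℤ} (hf : Aff f) : QE (fun v => 0 ≤ f v) := by
  refine ⟨1, {f}, one_pos, Set.finite_singleton _, by simpa using hf, ?_⟩
  intro x x' _ h h'
  exact (h f rfl).1 h'

theorem QE.eq {κ : Type} {f g : (κ → ℤ) → ℤ} (hf : Aff f) (hg : Aff g) :
    QE (fun v => f v = g v) :=
  ((QE.nonneg (hf.sub hg)).and (QE.nonneg (hg.sub hf))).congr fun v => by
    constructor
    · rintro ⟨h1, h2⟩; omega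
    · intro h; constructor <;> omega

theorem QE.sub {κ κ' : Type} {P : (κ → ℤ) → Prop} (hP : QE P)
    {g : (κ' → ℤ) → κ → ℤ} (hg : ∀ i, Aff (fun v => g v i)) : QE (fun v => P (g v)) := by
  obtain ⟨N, S, hN, hS, hA, h⟩ := hP
  refine ⟨N, (fun f v => f (g v)) '' S, hN, hS.image _, ?_, ?_⟩
  · rintro _ ⟨f, hf, rfl⟩
    exact (hA f hf).comp hg
  · intro x x' h1 h2 h3
    refine h _ _ (fun i => (hg i).congr_mod N h1) (fun f hf => ?_) h3
    exact h2 _ ⟨f, hf, rfl⟩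

/-- Normal form of an affine inequality w.r.t. the last variable. -/
theorem Aff.normal {κ : Type} {f : (Option κ → ℤ) → ℤ} {b c : ℤ} (hb : 0 < b)
    {u : (κ → ℤ) → ℤ} (hu : Aff u) (hf : ∀ x y, f (NoInter.ext x y) = c * y + u x)
    (hc : c ≠ 0 → c ∣ b) :
    ∃ u : (κ → ℤ) → ℤ, Aff u ∧ ((∀ x y, 0 ≤ f (NoInter.ext x y) ↔ 0 ≤ u x) ∨
      (∀ x y, 0 ≤ f (NoInter.ext x y) ↔ u x ≤ b * y) ∨
      (∀ x y, 0 ≤ f (NoInter.ext x y) ↔ ¬ u x ≤ b * y)) := by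
  rcases lt_trichotomy c 0 with h | h | h
  · obtain ⟨d, hd⟩ := hc h.ne
    have hd0 : d < 0 := by by_contra hh; push Not at hh; nlinarith
    refine ⟨fun x => 1 + (-d) * u x, (Aff.const 1).add (hu.smul (-d)), .inr (.inr fun x y => ?_)⟩
    rw [hf, hd]
    have e : (0 ≤ c * y + u x) ↔ 0 ≤ (-d) * (c * y + u x) := by
      rw [mul_nonneg_iff_of_pos_left (by omega)]
    rw [e]
    have e2 : (-d) * (c * y + u x) = - (c * d * y) + (-d) * u x := by ring
    rw [e2]
    beta_reduce
    omega
  · subst h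
    exact ⟨u, hu, .inl fun x y => by rw [hf]; simp⟩
  · obtain ⟨d, hd⟩ := hc h.ne'
    have hd0 : 0 < d := by by_contra hh; push Not at hh; nlinarith
    refine ⟨fun x => (-d) * u x, (hu.smul (-d)), .inr (.inl fun x y => ?_)⟩
    rw [hf, hd]
    have e : (0 ≤ c * y + u x) ↔ 0 ≤ d * (c * y + u x) := by
      rw [mul_nonneg_iff_of_pos_left (by omega)]
    rw [e]
    have e2 : d * (c * y + u x) = (c * d * y) - (-d) * u x := by ring
    rw [e2]
    beta_reduce
    omega

theorem QE.ex {κ : Type} {P : (κ → ℤ) → ℤ → Prop}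
    (h : QE (fun w : Option κ → ℤ => P (fun i => w (some i)) (w none))) :
    QE (fun v => ∃ y, P v y) := by
  classical
  obtain ⟨N, S, hN, hS, hA, h⟩ := h
  have hsp : ∀ f : S, ∃ (c : ℤ) (u : (κ → ℤ) → ℤ), Aff u ∧
      ∀ x y, f.1 (NoInter.ext x y) = c * y + u x := fun f => (hA f.1 f.2).split
  choose c u hu hcu using hsp
  have : Fintype S := hS.fintype
  let c' : S → ℤ := fun f => if c f = 0 then 1 else |c f|
  have hc'0 : ∀ f, 0 < c' f := by
    intro f
    simp only [c']
    split_ifs with h0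
    · exact one_pos
    · exact abs_pos.2 h0
  let b : ℤ := ∏ f, c' f
  have hb : 0 < b := Finset.prod_pos fun f _ => hc'0 f
  have hdvd : ∀ f, c f ≠ 0 → c f ∣ b := by
    intro f hf
    have : c' f ∣ b := Finset.dvd_prod_of_mem _ (Finset.mem_univ f)
    simp only [c', if_neg hf] at this
    exact (abs_dvd _ _).1 this
  have hnf := fun f : S => Aff.normal hb (hu f) (hcu f) (hdvd f)
  choose q hq hqf using hnf
  have hbN : 0 < b * N := mul_pos hb hN
  refine ⟨b * N, (Set.range q) ∪ (Set.range fun t : (S × S) × Finset.Ico 0 (b * N) =>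
    fun x => q t.1.1 x - q t.1.2 x + (t.2.1 : ℤ)), hbN,
    (Set.finite_range _).union (Set.finite_range _), ?_, ?_⟩
  · rintro f (⟨g, rfl⟩ | ⟨t, rfl⟩)
    · exact hq g
    · exact ((hq _).sub (hq _)).add (.const _)
  · rintro x x' h1 h2 ⟨y, hy⟩
    suffices hs : ∃ y', N ∣ y - y' ∧ ∀ f, q f x ≤ b * y ↔ q f x' ≤ b * y' by
      obtain ⟨y', hy1, hy2⟩ := hs
      refine ⟨y', h (NoInter.ext x y) (NoInter.ext x' y') ?_ ?_ hy⟩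
      · intro i
        cases i with
        | none => exact hy1
        | some i => exact (dvd_mul_left N b).trans (h1 i)
      · intro f hf
        rcases hqf ⟨f, hf⟩ with e | e | e
        · rw [e, e]
          exact h2 _ (.inl ⟨⟨f, hf⟩, rfl⟩)
        · rw [e, e]
          exact hy2 _
        · rw [e, e]
          exact not_congr (hy2 _)
    by_cases hex : ∃ f, q f x ≤ b * y
    · obtain ⟨f, hf, hmax⟩ : ∃ f, q f x ≤ b * y ∧ ∀ g, q g x ≤ b * y → q g x ≤ q f x := by
        obtain ⟨f0, hf0⟩ := hex
        obtain ⟨f, hf, hm⟩ := Finset.exists_max_image (Finset.univ.filter fun f => q f x ≤ b * y)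
          (fun f => q f x) ⟨f0, by simpa using hf0⟩
        refine ⟨f, by simpa using hf, fun g hg => hm g (by simpa using hg)⟩
      obtain ⟨e, k, he0, he1, hk, hek⟩ : ∃ e k, 0 ≤ e ∧ e < b * N ∧ 0 ≤ k ∧
          b * y = q f x + e + b * N * k := by
        refine ⟨(b * y - q f x) % (b * N), (b * y - q f x) / (b * N),
          Int.emod_nonneg _ hbN.ne', Int.emod_lt_of_pos _ hbN,
          Int.ediv_nonneg (by omega) hbN.le, ?_⟩
        have := Int.emod_add_mul_ediv (b * y - q f x) (b * N)
        linarith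
      obtain ⟨d, hd⟩ := (hq f).congr_mod (b * N) h1
      refine ⟨y - N * k - N * d, ⟨k + d, by ring⟩, fun g => ?_⟩
      have hby' : b * (y - N * k - N * d) = q f x' + e := by
        have : b * (y - N * k - N * d) = b * y - b * N * k - b * N * d := by ring
        rw [this]; linarith
      rw [hby']
      have h3 := h2 _ (.inr ⟨((f, g), ⟨e, by simp [he0, he1]⟩), rfl⟩)
      simp only at h3
      have hbNk : 0 ≤ b * N * k := mul_nonneg hbN.le hk
      constructor
      · intro hg
        have := hmax g hg
        have := h3.1 (by omega)
        omega
      · intro hg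
        have := h3.2 (by omega)
        omega
    · push Not at hex
      obtain ⟨m, hm⟩ : ∃ m, ∀ f, m ≤ q f x' := by
        obtain ⟨m, hm⟩ := (Set.finite_range fun f => q f x').bddBelow
        exact ⟨m, fun f => hm ⟨f, rfl⟩⟩
      have hbN1 : 1 ≤ N := hN
      have hb1 : 1 ≤ b := hb
      refine ⟨y - N * (|y| + |m| + 1), ⟨|y| + |m| + 1, by ring⟩, fun f => ?_⟩
      have h4 := hex f
      have h5 := hm f
      have h6 : y - N * (|y| + |m| + 1) ≤ - |m| - 1 := by
        have := le_abs_self y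
        have := abs_nonneg m
        have := abs_nonneg y
        nlinarith
      have h7 : b * (y - N * (|y| + |m| + 1)) ≤ - |m| - 1 := by
        have := abs_nonneg m
        nlinarith
      have := neg_abs_le m
      constructor
      · intro; omega
      · intro; omega

theorem QE.imp {κ : Type} {P Q : (κ → ℤ) → Prop} (hP : QE P) (hQ : QE Q) :
    QE (fun v => P v → Q v) :=
  (hP.and hQ.not).not.congr fun v => by tauto

section Formulas

variable {L : FirstOrder.Language.{0, 0}} [L.Structure ℤ]

theorem term_aff (hF : ∀ (n : ℕ) (f : L.Functions n), Aff (fun x : Fin n → ℤ => Structure.funMap f x))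
    {κ : Type} (t : L[[(Set.univ : Set ℤ)]].Term κ) : Aff (fun v : κ → ℤ => t.realize v) := by
  induction t with
  | var i => exact .var i
  | @func l f ts ih =>
    cases f with
    | inl f => exact (hF l f).comp ih
    | inr f =>
      cases l with
      | zero => exact .const f.1
      | succ => exact nomatch f

theorem formula_QE
    (hF : ∀ (n : ℕ) (f : L.Functions n), Aff (fun x : Fin n → ℤ => Structure.funMap f x))
    (hR : ∀ (n : ℕ) (r : L.Relations n), QE (fun x : Fin n → ℤ => Structure.RelMap r x))
    {κ : Type} {n : ℕ} (φ : L[[(Set.univ : Set ℤ)]].BoundedFormula κ n) :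
    QE (fun v : κ ⊕ Fin n → ℤ => φ.Realize (fun i => v (.inl i)) (fun i => v (.inr i))) := by
  have hel : ∀ {m : ℕ} (v : κ ⊕ Fin m → ℤ),
      Sum.elim (fun i => v (.inl i)) (fun i => v (.inr i)) = v := by
    intro m v; funext i; cases i <;> rfl
  induction φ with
  | falsum => exact QE.false
  | equal t₁ t₂ =>
    refine (QE.eq (term_aff hF t₁) (term_aff hF t₂)).congr fun v => ?_
    simp only [BoundedFormula.Realize, hel]
  | rel r ts =>
    cases r with
    | inl r =>
      refine ((hR _ r).sub (g := fun v i => (ts i).realize v)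
        (fun i => term_aff hF (ts i))).congr fun v => ?_
      simp only [BoundedFormula.Realize, hel]
      rfl
    | inr r => exact nomatch r
  | imp _ _ ih₁ ih₂ =>
    exact ih₁.imp ih₂
  | @all n φ ih =>
    let σ : κ ⊕ Fin (n + 1) → Option (κ ⊕ Fin n) :=
      Sum.elim (fun i => some (.inl i)) (Fin.lastCases none (fun j => some (.inr j)))
    have h1 := (ih.sub (g := fun (w : Option (κ ⊕ Fin n) → ℤ) i => w (σ i))
      (fun i => .var _)).not
    have h2 := (QE.ex (P := fun (v : κ ⊕ Fin n → ℤ) y => ¬ φ.Realize (fun i => v (.inl i))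
      (Fin.snoc (fun i => v (.inr i)) y)) (h1.congr fun w => ?_)).not
    · refine h2.congr fun v => ?_
      simp only [BoundedFormula.Realize, not_exists, not_not]
    · apply not_congr
      simp only [σ, Sum.elim_inl, Sum.elim_inr]
      have : (fun i => w (Fin.lastCases (motive := fun _ => Option (κ ⊕ Fin n)) none
          (fun j => some (.inr j)) i)) = Fin.snoc (fun i => w (some (.inr i))) (w none) := by
        funext i
        cases i using Fin.lastCases <;> simp
      rw [this]

theorem definable_QE
    (hF : ∀ (n : ℕ) (f : L.Functions n), Aff (fun x : Fin n → ℤ => Structure.funMap f x))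
    (hR : ∀ (n : ℕ) (r : L.Relations n), QE (fun x : Fin n → ℤ => Structure.RelMap r x))
    {κ : Type} {P : (κ → ℤ) → Prop} (hP : Dp L P) : QE P := by
  obtain ⟨φ, hφ⟩ := hP
  have h := (formula_QE hF hR φ).sub (g := fun v : κ → ℤ => Sum.elim v (Fin.elim0))
    (fun i => by
      cases i with
      | inl i => exact .var i
      | inr i => exact i.elim0)
  refine h.congr fun v => ?_
  have : v ∈ {v | P v} ↔ v ∈ Set.ofPred φ.Realize := by rw [hφ]
  refine Iff.trans ?_ this.symm
  have key : ∀ a b : Fin 0 → ℤ, BoundedFormula.Realize φ v a ↔ BoundedFormula.Realize φ v b :=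
    fun a b => by rw [Subsingleton.elim a b]
  exact key _ _

end Formulas

end NoInter

/-! Combinatorics of finite sets of integers -/

namespace NoInter

/-- Left endpoints of the maximal intervals of a finite set of integers. -/
def lft (F : Finset ℤ) : Finset ℤ := F.filter fun a => a - 1 ∉ F

/-- Erosion of a finite set by an interval of length `l`. -/
def erode (F : Finset ℤ) (l : ℕ) : Finset ℤ :=
  F.filter fun y => ∀ i ∈ Finset.range (l + 1), y - (i : ℤ) ∈ F

theorem mem_lft {F : Finset ℤ} {a : ℤ} : a ∈ lft F ↔ a ∈ F ∧ a - 1 ∉ F := by simp [lft]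

theorem mem_erode {F : Finset ℤ} {l : ℕ} {y : ℤ} :
    y ∈ erode F l ↔ ∀ d : ℤ, 0 ≤ d → d ≤ l → y - d ∈ F := by
  simp only [erode, Finset.mem_filter, Finset.mem_range]
  constructor
  · rintro ⟨_, h⟩ d h0 h1
    have := h d.toNat (by omega)
    rwa [Int.toNat_of_nonneg h0] at this
  · intro h
    exact ⟨by simpa using h 0 le_rfl (by omega), fun i hi => h i (by omega) (by omega)⟩

/-- Between a non-element and a larger element there is a left endpoint. -/
theorem exists_lft {F : Finset ℤ} {y z : ℤ} (hy : y ∉ F) (hz : z ∈ F) (h : y < z) :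
    ∃ a ∈ lft F, y < a ∧ a ≤ z ∧ ∀ d, a ≤ d → d ≤ z → d ∈ F := by
  induction hn : (z - y).toNat using Nat.strong_induction_on generalizing z with
  | _ n ih =>
    by_cases hz1 : z - 1 ∈ F
    · have hyz : y < z - 1 := by
        rcases lt_or_eq_of_le (show y ≤ z - 1 by omega) with h | h
        · exact h
        · exact absurd hz1 (h ▸ hy)
      obtain ⟨a, ha, h1, h2, h3⟩ := ih (z - 1 - y).toNat (by omega) hz1 hyz rfl
      refine ⟨a, ha, h1, by omega, fun d hd1 hd2 => ?_⟩
      rcases eq_or_ne d z with rfl | hne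
      · exact hz
      · exact h3 d hd1 (by omega)
    · exact ⟨z, mem_lft.2 ⟨hz, hz1⟩, h, le_rfl, fun d h1 h2 => by
        obtain rfl : d = z := by omega
        exact hz⟩

theorem card_le_erode (F : Finset ℤ) (l : ℕ) :
    F.card ≤ (erode F l).card + l * (lft F).card := by
  classical
  have hsub : F ⊆ erode F l ∪ (Finset.range l ×ˢ lft F).image fun p => p.2 + (p.1 : ℤ) := by
    intro y hy
    by_cases hE : y ∈ erode F l
    · exact Finset.mem_union_left _ hE
    · apply Finset.mem_union_right
      rw [mem_erode] at hE
      push Not at hE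
      obtain ⟨d, h0, h1, hd⟩ := hE
      have hd0 : d ≠ 0 := by rintro rfl; simp [hy] at hd
      obtain ⟨a, ha, h2, h3, _⟩ := exists_lft hd hy (by omega)
      refine Finset.mem_image.2 ⟨((y - a).toNat, a), ?_, ?_⟩
      · simp only [Finset.mem_product, Finset.mem_range]
        exact ⟨by omega, ha⟩
      · simp only
        omega
  calc F.card ≤ _ := Finset.card_le_card hsub
    _ ≤ _ := Finset.card_union_le _ _
    _ ≤ (erode F l).card + l * (lft F).card := by
      gcongr
      refine Finset.card_image_le.trans ?_
      simp

theorem lft_erode_lt {F : Finset ℤ} (hF : F.Nonempty) (l : ℕ)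
    (hW : ∀ t a : ℤ, (a ∈ F ∧ a - t ∈ F) → ¬ (a - 1 ∈ F ∧ a - 1 - t ∈ F) →
      (∀ b : ℤ, (b ∈ F ∧ b - t ∈ F) → ¬ (b - 1 ∈ F ∧ b - 1 - t ∈ F) → b = a) →
      ¬ (a + l ∈ F ∧ a + l - t ∈ F)) :
    (lft (erode F l)).card < (lft F).card := by
  classical
  by_contra hcon
  push Not at hcon
  have himg : (lft (erode F l)).image (fun e => e - (l : ℤ)) ⊆ lft F := by
    intro a ha
    obtain ⟨e, he, rfl⟩ := Finset.mem_image.1 ha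
    rw [mem_lft, mem_erode, mem_erode] at he
    obtain ⟨h1, h2⟩ := he
    push Not at h2
    obtain ⟨d, hd0, hd1, hd⟩ := h2
    rw [mem_lft]
    refine ⟨h1 l (by omega) le_rfl, ?_⟩
    rcases eq_or_ne d l with rfl | hne
    · rwa [show e - (l : ℤ) - 1 = e - 1 - l by ring]
    · have := h1 (d + 1) (by omega) (by omega)
      rw [show e - (d + 1) = e - 1 - d by ring] at this
      exact absurd this hd
  have heq := Finset.eq_of_subset_of_card_le himg (by
    rw [Finset.card_image_of_injective _ (fun a b h => by simpa using h)]
    exact hcon)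
  have hlong : ∀ a ∈ lft F, ∀ d : ℤ, 0 ≤ d → d ≤ l → a + d ∈ F := by
    intro a ha d h0 h1
    rw [← heq] at ha
    obtain ⟨e, he, rfl⟩ := Finset.mem_image.1 ha
    have := mem_erode.1 (mem_lft.1 he).1 (l - d) (by omega) (by omega)
    rwa [show e - (l : ℤ) + d = e - (l - d) by ring]
  set m := F.min' hF with hm
  set M := F.max' hF with hM
  have hmF : m ∈ F := F.min'_mem hF
  have hMF : M ∈ F := F.max'_mem hF
  have hmin : ∀ y ∈ F, m ≤ y := fun y hy => F.min'_le y hy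
  have hmax : ∀ y ∈ F, y ≤ M := fun y hy => F.le_max' y hy
  have hm1 : m - 1 ∉ F := fun h => by have := hmin _ h; omega
  have hmM : m ≤ M := hmin _ hMF
  have hlm : ∀ d : ℤ, 0 ≤ d → d ≤ l → m + d ∈ F := hlong m (mem_lft.2 ⟨hmF, hm1⟩)
  have hlM : ∀ d : ℤ, 0 ≤ d → d ≤ l → M - d ∈ F := by
    intro d h0 h1
    by_contra hd
    have hd0 : d ≠ 0 := by rintro rfl; simp [hMF] at hd
    obtain ⟨a, ha, h2, h3, h4⟩ := exists_lft hd hMF (by omega)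
    have := hmax _ (hlong a ha l (by omega) le_rfl)
    omega
  -- the intersection of `F` with `F + (M - m - l)` is the interval `[M - l, M]`
  have hG : ∀ y, (y ∈ F ∧ y - (M - m - l) ∈ F) ↔ M - l ≤ y ∧ y ≤ M := by
    intro y
    constructor
    · rintro ⟨h1, h2⟩
      have := hmax _ h1
      have := hmin _ h2
      omega
    · rintro ⟨h1, h2⟩
      constructor
      · have := hlM (M - y) (by omega) (by omega)
        rwa [show M - (M - y) = y by ring] at this
      · have := hlm (y - M + l) (by omega) (by omega)
        rwa [show m + (y - M + l) = y - (M - m - l) by ring] at this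
  refine hW (M - m - l) (M - l) ((hG _).2 (by omega)) (fun h => ?_) (fun b hb hb' => ?_)
    ((hG _).2 (by omega))
  · have := (hG _).1 h
    omega
  · have h1 := (hG _).1 hb
    have h2 := fun h => hb' ((hG (b - 1)).2 h)
    by_contra hne
    exact h2 (by omega)

end NoInter

/-! The main argument -/

namespace NoInter

open FirstOrder FirstOrder.Language Set

section Main

variable {L : FirstOrder.Language.{0, 0}} [L.Structure ℤ]

/-- `ℕ` is definable. -/
def NatDef (L : FirstOrder.Language.{0, 0}) [L.Structure ℤ] : Prop :=
  Dp L (fun v : Unit → ℤ => 0 ≤ v ())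

theorem Dp.mem_finset (hL : AddDef L) {κ : Type} {f : (κ → ℤ) → ℤ} (hf : Aff f) (s : Finset ℤ) :
    Dp L (fun v => f v ∈ s) :=
  (Dp.finEx (ι := s) (P := fun c v => f v = c.1) fun c => Dp.eq hL hf (.const _)).congr
    fun v => by simp

theorem natDef_of (hL : AddDef L) {S : ℤ → Prop} (hS : Dp L (fun v : Unit → ℤ => S (v ())))
    {T : ℤ} (h1 : ∀ t, T ≤ t → S t) (h2 : ∀ t, t ≤ -T → ¬ S t) : NatDef L := by
  have a := Dp.mem_finset hL (Aff.var ()) (Finset.Icc 0 T)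
  have b := Dp.mem_finset hL (Aff.var ()) (Finset.Icc (-T) (-1))
  refine ((hS.or a).and b.not).congr fun v => ?_
  simp only [Finset.mem_Icc]
  have h3 := h1 (v ())
  have h4 := h2 (v ())
  by_cases hs : S (v ())
  · simp only [hs, not_true_eq_false, imp_false] at h4
    simp only [hs, true_or, true_and]
    omega
  · simp only [hs, imp_false] at h3
    simp only [hs, false_or]
    omega

/-- A definable family of finite sets with boundedly many components is of bounded size, unless
`ℕ` is definable. -/
theorem bounded (hL : AddDef L) (hN : ¬ NatDef L) {ι : Type} [Finite ι] (k : ℕ) :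
    ∀ F : (ι → ℤ) → Finset ℤ, Dp L (fun w : Option ι → ℤ => w none ∈ F (fun i => w (some i))) →
      (∀ x, (lft (F x)).card ≤ k) → ∃ m, ∀ x, (F x).card ≤ m := by
  induction k with
  | zero =>
    intro F _ hk
    refine ⟨0, fun x => ?_⟩
    have := card_le_erode (F x) 0
    by_contra hne
    have hne' : (F x).Nonempty := by rw [← Finset.card_pos]; omega
    have hm := (F x).min'_mem hne'
    have : (F x).min' hne' ∈ lft (F x) := mem_lft.2 ⟨hm, fun h => by
      have := (F x).min'_le _ h
      omega⟩
    have := Finset.card_pos.2 ⟨_, this⟩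
    have := hk x
    omega
  | succ k ih =>
    intro F hF hk
    have hat : ∀ {κ : Type} {g : (κ → ℤ) → ι → ℤ} {f : (κ → ℤ) → ℤ},
        (∀ i, Aff (fun v => g v i)) → Aff f → Dp L (fun v => f v ∈ F (g v)) := by
      intro κ g f hg hf
      exact hF.sub hL (g := fun v => NoInter.ext (g v) (f v)) (fun i => Aff.ext hg hf i)
    let G : (ι → ℤ) → ℤ → ℤ → Prop := fun x t y => y ∈ F x ∧ y - t ∈ F x
    have hG : ∀ {κ : Type} {g : (κ → ℤ) → ι → ℤ} {t y : (κ → ℤ) → ℤ},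
        (∀ i, Aff (fun v => g v i)) → Aff t → Aff y → Dp L (fun v => G (g v) (t v) (y v)) :=
      fun hg ht hy => (hat hg hy).and (hat hg (hy.sub ht))
    let W : ℤ → Prop := fun d => ∃ x : ι → ℤ, ∃ t a, (G x t a ∧ ¬ G x t (a - 1) ∧
      ∀ b, G x t b → ¬ G x t (b - 1) → b = a) ∧ G x t (a + d)
    have hW : Dp L (fun v : Unit → ℤ => W (v ())) := by
      apply Dp.exs
      apply Dp.ex
      apply Dp.ex
      refine Dp.and (Dp.and ?_ (Dp.and (Dp.not ?_) (Dp.all (Dp.imp ?_ (Dp.imp (Dp.not ?_) ?_))))) ?_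
      · exact hG (fun i => .var _) (.var _) (.var _)
      · exact hG (fun i => .var _) (.var _) (.sub (.var _) (.const _))
      · exact hG (fun i => .var _) (.var _) (.var _)
      · exact hG (fun i => .var _) (.var _) (.sub (.var _) (.const _))
      · exact Dp.eq hL (.var _) (.var _)
      · exact hG (fun i => .var _) (.var _) (.add (.var _) (.var _))
    have hWpos : ∀ d, W d → 0 ≤ d := by
      rintro d ⟨x, t, a, ⟨h1, h2, h3⟩, h4⟩
      classical
      let H := (F x).filter fun y => y - t ∈ F x
      have hH : ∀ y, y ∈ H ↔ G x t y := fun y => by simp [H, G]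
      have hne : H.Nonempty := ⟨a, (hH a).2 h1⟩
      have h5 := h3 (H.min' hne) ((hH _).1 (H.min'_mem hne)) (fun h => by
        have := H.min'_le _ ((hH _).2 h)
        omega)
      have := H.min'_le _ ((hH _).2 h4)
      omega
    obtain ⟨d, hd0, hd⟩ : ∃ d, 0 ≤ d ∧ ¬ W d := by
      by_contra hcon
      push Not at hcon
      exact hN (hW.congr fun v => ⟨hWpos _, hcon _⟩)
    obtain ⟨l, rfl⟩ := Int.eq_ofNat_of_zero_le hd0
    obtain ⟨m, hm⟩ := ih (fun x => erode (F x) l) (by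
      refine Dp.congr (P := fun w : Option ι → ℤ => ∀ i : Fin (l + 1),
        w none - ((i.1 : ℕ) : ℤ) ∈ F (fun i => w (some i))) (Dp.finAll fun i => ?_) fun w => ?_
      · exact hat (fun i => .var _) (.sub (.var _) (.const _))
      · rw [mem_erode]
        constructor
        · intro h d h0 h1
          have := h ⟨d.toNat, by omega⟩
          simp only [Int.toNat_of_nonneg h0] at this
          exact this
        · intro h i
          exact h _ (by omega) (by omega)) (by
      intro x
      rcases (F x).eq_empty_or_nonempty with he | hne
      · simp [he, erode, lft]
      · have := lft_erode_lt hne l (fun t a h1 h2 h3 h4 => hd ⟨x, t, a, ⟨h1, h2, h3⟩, h4⟩)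
        have := hk x
        omega)
    refine ⟨m + l * (k + 1), fun x => ?_⟩
    calc (F x).card ≤ _ := card_le_erode (F x) l
      _ ≤ m + l * (k + 1) := by gcongr; exacts [hm x, hk x]

/-- Fibrewise description of Presburger sets. -/
structure FD {ι : Type} (J : Type) (b : J → ℤ) (u : J → (ι → ℤ) → ℤ)
    (B : (ι → ℤ) → ℤ → Prop) : Prop where
  aff : ∀ j, Aff (u j)
  det : ∀ x t t', (∀ j, 0 ≤ b j * t + u j x ↔ 0 ≤ b j * t' + u j x) → B x t → B x t'

theorem FD.card_lft {ι J : Type} [Fintype J] {b : J → ℤ} {u : J → (ι → ℤ) → ℤ}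
    {B : (ι → ℤ) → ℤ → Prop} (h : FD J b u B) (x : ι → ℤ) (F : Finset ℤ)
    (hF : ∀ t, t ∈ F ↔ B x t) : (lft F).card ≤ Fintype.card J := by
  refine Finset.card_le_card_of_forall_subsingleton (t := Finset.univ)
    (fun a j => ¬ (0 ≤ b j * (a - 1) + u j x ↔ 0 ≤ b j * a + u j x)) ?_ ?_
  · intro a ha
    rw [mem_lft, hF, hF] at ha
    by_contra hcon
    push Not at hcon
    exact ha.2 (h.det x a (a - 1) (fun j => (hcon j (Finset.mem_univ _)).symm) ha.1)
  · rintro j -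
    have key : ∀ a a' : ℤ, ¬ (0 ≤ b j * (a - 1) + u j x ↔ 0 ≤ b j * a + u j x) →
        ¬ (0 ≤ b j * (a' - 1) + u j x ↔ 0 ≤ b j * a' + u j x) → ¬ a < a' := by
      intro a a' h1 h2 hlt
      rcases le_total 0 (b j) with hb | hb
      · have e1 : b j * (a - 1) ≤ b j * a := by nlinarith
        have e2 : b j * a ≤ b j * (a' - 1) := mul_le_mul_of_nonneg_left (by omega) hb
        have e3 : b j * (a' - 1) ≤ b j * a' := by nlinarith
        omega
      · have e1 : b j * a ≤ b j * (a - 1) := by nlinarith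
        have e2 : b j * (a' - 1) ≤ b j * a := mul_le_mul_of_nonpos_left (by omega) hb
        have e3 : b j * a' ≤ b j * (a' - 1) := by nlinarith
        omega
    rintro a ⟨-, ha⟩ a' ⟨-, ha'⟩
    have := key a a' ha ha'
    have := key a' a ha' ha
    omega

theorem FD.finite_or {ι J : Type} [Fintype J] {b : J → ℤ} {u : J → (ι → ℤ) → ℤ}
    {B : (ι → ℤ) → ℤ → Prop} (h : FD J b u B) (hL : AddDef L) (hN : ¬ NatDef L) (x : ι → ℤ)
    (hB : Dp L (fun v : Unit → ℤ => B x (v ()))) :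
    {t | B x t}.Finite ∨ {t | ¬ B x t}.Finite := by
  obtain ⟨T, hT⟩ : ∃ T, ∀ j, |u j x| < T := by
    refine ⟨1 + ∑ j, |u j x|, fun j => ?_⟩
    have := Finset.single_le_sum (f := fun j => |u j x|) (fun j _ => abs_nonneg _)
      (Finset.mem_univ j)
    omega
  have hpos : ∀ t t', T ≤ t → T ≤ t' → B x t → B x t' := by
    intro t t' ht ht'
    refine h.det x t t' fun j => ?_
    have h0 := abs_lt.1 (hT j)
    rcases lt_trichotomy (b j) 0 with hb | hb | hb
    · constructor <;> intro <;> nlinarith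
    · simp [hb]
    · constructor <;> intro <;> nlinarith
  have hneg : ∀ t t', t ≤ -T → t' ≤ -T → B x t → B x t' := by
    intro t t' ht ht'
    refine h.det x t t' fun j => ?_
    have h0 := abs_lt.1 (hT j)
    rcases lt_trichotomy (b j) 0 with hb | hb | hb
    · constructor <;> intro <;> nlinarith
    · simp [hb]
    · constructor <;> intro <;> nlinarith
  by_cases h1 : B x T <;> by_cases h2 : B x (-T)
  · right
    refine (Set.finite_Icc (-T) T).subset fun t ht => ?_
    by_contra hcon
    rw [Set.mem_Icc, not_and_or] at hcon
    rcases hcon with hc | hc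
    · exact ht (hneg _ _ le_rfl (by omega) h2)
    · exact ht (hpos _ _ le_rfl (by omega) h1)
  · exact absurd (natDef_of hL hB (T := T) (fun t ht => hpos _ _ le_rfl ht h1)
      (fun t ht hb => h2 (hneg _ _ ht le_rfl hb))) hN
  · have hn : Dp L (fun v : Unit → ℤ => ¬ B x (v ())) := hB.not
    exact absurd (natDef_of hL (S := fun t => ¬ B x t) hn (T := T)
      (fun t ht hb => h1 (hpos _ _ ht le_rfl hb))
      (fun t ht hb => hb (hneg _ _ le_rfl ht h2))) hN
  · left
    refine (Set.finite_Icc (-T) T).subset fun t ht => ?_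
    by_contra hcon
    rw [Set.mem_Icc, not_and_or] at hcon
    rcases hcon with hc | hc
    · exact h2 (hneg _ _ (by omega) le_rfl ht)
    · exact h1 (hpos _ _ (by omega) le_rfl ht)

variable {L' : FirstOrder.Language.{0, 0}} [L'.Structure ℤ]

/-- The case of finite fibres. -/
theorem core (hL : AddDef L) (hN : ¬ NatDef L) (hL' : AddDef L') {ι J : Type} [Finite ι]
    [Fintype J] (ih : ∀ P : (ι → ℤ) → Prop, Dp L P → Dp L' P)
    {b : J → ℤ} {u : J → (ι → ℤ) → ℤ} {B : (ι → ℤ) → ℤ → Prop} (h : FD J b u B)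
    (hB : Dp L (fun w : Option ι → ℤ => B (fun i => w (some i)) (w none)))
    (hfin : ∀ x, {t | B x t}.Finite) :
    Dp L' (fun w : Option ι → ℤ => B (fun i => w (some i)) (w none)) := by
  obtain ⟨m, hm⟩ := bounded hL hN (Fintype.card J) (fun x => (hfin x).toFinset)
    (hB.congr fun w => by simp) (fun x => h.card_lft x _ (fun t => by simp))
  let C : ℤ := m * ∑ j, |b j|
  have hC : ∀ j (s : ℤ), 0 ≤ s → s ≤ m → |b j * s| ≤ C := by
    intro j s h0 h1
    have := Finset.single_le_sum (f := fun j => |b j|) (fun j _ => abs_nonneg _)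
      (Finset.mem_univ j)
    rw [abs_mul, abs_of_nonneg h0, mul_comm]
    exact mul_le_mul h1 this (abs_nonneg _) (by omega)
  have hnear : ∀ x t, B x t → ∃ j, b j ≠ 0 ∧ b j * t + u j x ∈ Finset.Icc (-C) C := by
    intro x t hBt
    by_contra hcon
    push Not at hcon
    have hsub : (Finset.range (m + 1)).image (fun s : ℕ => t + (s : ℤ)) ⊆ (hfin x).toFinset := by
      intro y hy
      obtain ⟨s, hs, rfl⟩ := Finset.mem_image.1 hy
      rw [Finset.mem_range] at hs
      simp only [Set.Finite.mem_toFinset, Set.mem_ofPred_eq]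
      refine h.det x t _ (fun j => ?_) hBt
      by_cases hb : b j = 0
      · simp [hb]
      · have h1 := hcon j hb
        rw [Finset.mem_Icc] at h1
        have h2 := abs_le.1 (hC j s (by omega) (by omega))
        rw [mul_add]
        omega
    have h1 := Finset.card_le_card hsub
    rw [Finset.card_image_of_injective _ (fun a b h => by simpa using h), Finset.card_range] at h1
    have := hm x
    omega
  have hBat : ∀ {κ : Type} {g : (κ → ℤ) → ι → ℤ} {f : (κ → ℤ) → ℤ},
      (∀ i, Aff (fun v => g v i)) → Aff f → Dp L (fun v => B (g v) (f v)) := by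
    intro κ g f hg hf
    exact hB.sub hL (g := fun v => NoInter.ext (g v) (f v)) (fun i => Aff.ext hg hf i)
  have hE : ∀ j (c : ℤ), Dp L' (fun x => ∃ s, b j * s + u j x = c ∧ B x s) := by
    intro j c
    apply ih
    apply Dp.ex
    refine Dp.and (Dp.eq hL ?_ (.const c)) (hBat (fun i => .var _) (.var _))
    exact ((Aff.var _).smul _).add ((h.aff j).comp fun i => .var _)
  refine Dp.congr (P := fun w => ∃ j : {j // b j ≠ 0}, ∃ c : Finset.Icc (-C) C,
    b j * w none + u j (fun i => w (some i)) = c.1 ∧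
      ∃ s, b j * s + u j (fun i => w (some i)) = c.1 ∧ B (fun i => w (some i)) s)
    (Dp.finEx fun j => Dp.finEx fun c => Dp.and (Dp.eq hL' ?_ (.const _)) ?_) fun w => ?_
  · exact ((Aff.var _).smul _).add ((h.aff j).comp fun i => .var _)
  · exact (hE j c).sub hL' (g := fun (w : Option ι → ℤ) i => w (some i)) (fun i => .var _)
  · constructor
    · rintro ⟨⟨j, hj⟩, c, h1, s, h2, h3⟩
      have : b j * s = b j * w none := by simp only at h1 h2; omega
      rwa [mul_left_cancel₀ hj this] at h3
    · intro hw
      obtain ⟨j, hj, hc⟩ := hnear _ _ hw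
      exact ⟨⟨j, hj⟩, ⟨_, hc⟩, rfl, w none, rfl, hw⟩

theorem core2 (hL : AddDef L) (hN : ¬ NatDef L) (hL' : AddDef L') {ι J : Type} [Finite ι]
    [Fintype J] (ih : ∀ P : (ι → ℤ) → Prop, Dp L P → Dp L' P)
    {b : J → ℤ} {u : J → (ι → ℤ) → ℤ} {B : (ι → ℤ) → ℤ → Prop} (h : FD J b u B)
    (hB : Dp L (fun w : Option ι → ℤ => B (fun i => w (some i)) (w none))) :
    Dp L' (fun w : Option ι → ℤ => B (fun i => w (some i)) (w none)) := by
  have hBat : ∀ {κ : Type} {g : (κ → ℤ) → ι → ℤ} {f : (κ → ℤ) → ℤ},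
      (∀ i, Aff (fun v => g v i)) → Aff f → Dp L (fun v => B (g v) (f v)) := by
    intro κ g f hg hf
    exact hB.sub hL (g := fun v => NoInter.ext (g v) (f v)) (fun i => Aff.ext hg hf i)
  have hfc := fun x => h.finite_or hL hN x (hBat (fun i => .const _) (.var _))
  let D : (ι → ℤ) → Prop := fun x => ∀ d, ∃ t, B x t ∧ B x (t + d)
  have hD : Dp L D := by
    apply Dp.all
    apply Dp.ex
    exact Dp.and (hBat (fun i => .var _) (.var _))
      (hBat (fun i => .var _) (.add (.var _) (.var _)))
  have hD1 : ∀ x, D x → {t | ¬ B x t}.Finite := by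
    intro x hx
    refine (hfc x).resolve_left fun hf => ?_
    obtain ⟨M, hM⟩ := hf.bddAbove
    obtain ⟨m, hm⟩ := hf.bddBelow
    obtain ⟨t, h1, h2⟩ := hx (M - m + 1)
    have := hM h2
    have := hm h1
    omega
  have hD2 : ∀ x, ¬ D x → {t | B x t}.Finite := by
    intro x hx
    refine (hfc x).resolve_right fun hf => hx fun d => ?_
    have hf2 : {t | ¬ B x (t + d)}.Finite :=
      hf.preimage (f := fun t => t + d) (fun a _ b _ h => by simpa using h)
    obtain ⟨t, ht⟩ := (hf.union hf2).infinite_compl.nonempty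
    simp only [Set.mem_compl_iff, Set.mem_union, Set.mem_ofPred_eq, not_or, not_not] at ht
    exact ⟨t, ht⟩
  have hDo : Dp L (fun w : Option ι → ℤ => D (fun i => w (some i))) :=
    hD.sub hL (g := fun (w : Option ι → ℤ) i => w (some i)) (fun i => .var _)
  have hDo' : Dp L' (fun w : Option ι → ℤ => D (fun i => w (some i))) :=
    (ih _ hD).sub hL' (g := fun (w : Option ι → ℤ) i => w (some i)) (fun i => .var _)
  have c1 := core hL hN hL' ih (B := fun x t => D x ∧ ¬ B x t) (b := b) (u := u)
    ⟨h.aff, fun x t t' hs hb => ⟨hb.1, fun hb' => hb.2 (h.det x t' t (fun j => (hs j).symm) hb')⟩⟩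
    (hDo.and hB.not) (fun x => by
      by_cases hx : D x
      · simpa [hx] using hD1 x hx
      · simp [hx])
  have c2 := core hL hN hL' ih (B := fun x t => ¬ D x ∧ B x t) (b := b) (u := u)
    ⟨h.aff, fun x t t' hs hb => ⟨hb.1, h.det x t t' hs hb.2⟩⟩
    (hDo.not.and hB) (fun x => by
      by_cases hx : D x
      · simp [hx]
      · simpa [hx] using hD2 x hx)
  refine ((hDo'.and c1.not).or c2).congr fun w => ?_
  tauto

theorem step (hL : AddDef L) (hN : ¬ NatDef L) (hL' : AddDef L') {ι : Type} [Finite ι]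
    (ih : ∀ P : (ι → ℤ) → Prop, Dp L P → Dp L' P) (P : (Option ι → ℤ) → Prop)
    (hP : Dp L P) (hQ : QE P) : Dp L' P := by
  obtain ⟨N, S, hN0, hS, hA, h⟩ := hQ
  have : Fintype S := hS.fintype
  have hsp : ∀ f : S, ∃ (c : ℤ) (u : (ι → ℤ) → ℤ), Aff u ∧
      ∀ x y, f.1 (NoInter.ext x y) = c * y + u x := fun f => (hA f.1 f.2).split
  choose c u hu hcu using hsp
  have hB : ∀ r : Finset.Ico 0 N, Dp L' (fun w : Option ι → ℤ =>
      P (NoInter.ext (fun i => w (some i)) (r.1 + N * w none))) := by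
    intro r
    refine core2 (B := fun x t => P (NoInter.ext x (r.1 + N * t))) hL hN hL' ih (J := S)
      (b := fun j => c j * N) (u := fun j x => u j x + c j * r.1) ⟨?_, ?_⟩ ?_
    · exact fun j => (hu j).add (.const _)
    · intro x t t' hs
      refine h _ _ ?_ ?_
      · intro i
        cases i with
        | none => exact ⟨t - t', by simp only [ext_none]; ring⟩
        | some i => simp
      · intro f hf
        have := hs ⟨f, hf⟩
        have e : ∀ y, f (NoInter.ext x y) = _ := hcu ⟨f, hf⟩ x
        rw [e, e]
        convert! this using 2 <;> ring
    · exact hP.sub hL (g := fun (w : Option ι → ℤ) =>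
        NoInter.ext (fun i => w (some i)) (r.1 + N * w none))
        (fun i => Aff.ext (fun i => .var _) ((Aff.const _).add ((Aff.var _).smul _)) i)
  refine Dp.congr (P := fun w => ∃ r : Finset.Ico 0 N, ∃ t, w none = r.1 + N * t ∧
    P (NoInter.ext (fun i => w (some i)) (r.1 + N * t))) (Dp.finEx fun r => Dp.ex (Dp.and ?_ ?_))
    fun w => ?_
  · exact Dp.eq hL' (.var _) ((Aff.const _).add ((Aff.var _).smul _))
  · exact (hB r).sub hL' (g := fun (w : Option ι ⊕ Unit → ℤ) =>
      NoInter.ext (fun i => w (.inl (some i))) (w (.inr ())))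
      (fun i => Aff.ext (fun i => .var _) (.var _) i)
  · constructor
    · rintro ⟨r, t, h1, h2⟩
      rwa [← h1, ext_eta] at h2
    · intro hw
      refine ⟨⟨w none % N, ?_⟩, w none / N, ?_, ?_⟩
      · simp [Int.emod_nonneg _ hN0.ne', Int.emod_lt_of_pos _ hN0]
      · exact (Int.emod_add_mul_ediv _ _).symm
      · simp only
        rwa [Int.emod_add_mul_ediv, ext_eta]

theorem main (hL : AddDef L) (hN : ¬ NatDef L) (hL' : AddDef L')
    (hQ : ∀ {κ : Type} {P : (κ → ℤ) → Prop}, Dp L P → QE P) (ι : Type) [Finite ι] :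
    ∀ P : (ι → ℤ) → Prop, Dp L P → Dp L' P := by
  induction ι using Finite.induction_empty_option with
  | @of_equiv α β e ih =>
    intro P hP
    have h1 := ih _ (hP.reindex e.symm)
    refine (h1.reindex e).congr fun v => ?_
    simp
  | h_empty =>
    intro P _
    refine (Dp.prop (P default)).congr fun v => ?_
    rw [Subsingleton.elim v default]
  | @h_option α _ ih =>
    intro P hP
    exact step hL hN hL' ih P hP (hQ hP)

end Main

end NoInter

/-! The concrete languages -/

namespace NoInter

open FirstOrder FirstOrder.Language Set

theorem grp_addDef : AddDef LangGrp :=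
  Set.DefinableFun.of_empty (Set.DefinableFun.fun_symbol (L := LangGrp) (n := 2) ())

theorem rel_addDef {n : ℕ} (A : Set (Fin n → ℤ)) :
    letI := relStructure A
    AddDef (LangGrpRel n) := by
  letI := relStructure A
  exact Set.DefinableFun.of_empty (Set.DefinableFun.fun_symbol (L := LangGrpRel n) (n := 2) ())

theorem grp_aff : ∀ (n : ℕ) (f : LangGrp.Functions n),
    Aff (fun x : Fin n → ℤ => Structure.funMap f x)
  | 0, _ => Aff.const 0
  | 1, f => Empty.elim f
  | 2, _ => Aff.add (Aff.var 0) (Aff.var 1)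
  | (_ + 3), f => Empty.elim f

theorem rel_aff {m : ℕ} (A : Set (Fin m → ℤ)) :
    letI := relStructure A
    ∀ (n : ℕ) (f : (LangGrpRel m).Functions n), Aff (fun x : Fin n → ℤ => Structure.funMap f x)
  | 0, _ => Aff.const 0
  | 1, f => Empty.elim f
  | 2, _ => Aff.add (Aff.var 0) (Aff.var 1)
  | (_ + 3), f => Empty.elim f

theorem rel_QE {n : ℕ} (A : Set (Fin n → ℤ)) (hA : QE (fun v => v ∈ A)) {κ : Type}
    {P : (κ → ℤ) → Prop} :
    letI := relStructure A
    Dp (LangGrpRel n) P → QE P := by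
  letI := relStructure A
  intro hP
  refine definable_QE (L := LangGrpRel n) (rel_aff A) (fun m r => ?_) hP
  by_cases h : m = n
  · subst h
    refine hA.congr fun v => ?_
    change v ∈ A ↔ (if h : m = m then (fun i : Fin m => v (Fin.cast h.symm i)) ∈ A else False)
    simp
  · refine QE.false.congr fun v => ?_
    change False ↔ (if h : m = n then (fun i : Fin n => v (Fin.cast h.symm i)) ∈ A else False)
    simp [h]

theorem rel_definable {n : ℕ} (A : Set (Fin n → ℤ)) :
    letI := relStructure A
    Dp (LangGrpRel n) (fun v => v ∈ A) := by
  letI := relStructure A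
  have hr : (LangGrpRel n).Relations n := by
    change if n = n then Unit else Empty
    rw [if_pos rfl]
    exact ()
  unfold Dp
  refine Set.Definable.mono (A := ∅) ?_ (Set.empty_subset _)
  rw [Set.empty_definable_iff]
  refine ⟨Relations.formula hr (fun i => Term.var i), ?_⟩
  ext v
  simp only [Set.mem_ofPred_eq, Formula.realize_rel, Term.realize_var]
  change v ∈ A ↔ (if h : n = n then (fun i : Fin n => v (Fin.cast h.symm i)) ∈ A else False)
  simp

theorem presburger_QE {n : ℕ} {A : Set (Fin n → ℤ)} (hA : IsPresburger A) :
    QE (fun v => v ∈ A) := by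
  refine definable_QE (L := LangOrdGrp) (fun m f => ?_) (fun m r => ?_) hA
  · cases f with
    | inl f => exact grp_aff m f
    | inr f => exact nomatch f
  · cases r with
    | inl r => exact nomatch r
    | inr r =>
      cases r
      refine (QE.nonneg ((Aff.var 1).sub (Aff.var 0))).congr fun v => ?_
      change _ ↔ v 0 ≤ v 1
      exact sub_nonneg

end NoInter

/-- main theorem: for every `n ≥ 1`, every Presburger subset of `ℤⁿ` is either
definable in `(ℤ,+,0)` or defines the ordering; i.e. any expansion of `(ℤ,+,0)` which is a reduct
of `(ℤ,+,<,0)` is interdefinable with `(ℤ,+,0)` or with `(ℤ,+,<,0)`. -/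
theorem stmt18 (n : ℕ) (hn : 1 ≤ n) (A : Set (Fin n → ℤ)) (hA : IsPresburger A) :
    IsGroupDefinable A ∨ DefinesOrdering A := by
  letI inst := relStructure A
  by_cases hN : NoInter.NatDef (LangGrpRel n)
  · right
    have h := NoInter.Dp.reindex hN (fun _ => (0 : Fin 1))
    exact h
  · left
    have hAQ : NoInter.QE (fun v => v ∈ A) := NoInter.presburger_QE hA
    have hAd : NoInter.Dp (LangGrpRel n) (fun v => v ∈ A) := NoInter.rel_definable A
    exact NoInter.main (L := LangGrpRel n) (L' := LangGrp) (NoInter.rel_addDef A) hN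
      NoInter.grp_addDef (fun hP => NoInter.rel_QE A hAQ hP) (Fin n) _ hAd
end
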